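/- arXiv:1508.07920 — 3 statements merged into one kernel-verified Lean document; each statement's English description precedes it below -/
import Mathlib

section
/- Consider a confidential DMS (V_c, p_{V_c}) and an independent public DMS (V_p, p_{V_p}) to be transmitted over a discrete memoryless wiretap channel p_{YZ|X}. Suppose there exists a finite set Q and a joint probability mass function p_{QX} on Q × X (with (Y,Z) generated from X through the channel, so that Q − X − (Y,Z) is a Markov chain) such that H(V_c) + H(V_p) < I(X;Y|Q), H(V_c) < I(X;Y|Q) − I(X;Z|Q), and H(V_p) > I(X;Z|Q). Then there exists a sequence of codes {C_n} (deterministic encoders f_n : V_c^n × V_p^n × {1,…,2^{d_n}} → X^n using a uniformly distributed seed of d_n bits with d_n/n → 0, and decoders g_n : Y^n → V_c^n × V_p^n) such that the average error probability P_e(C_n) = P[(V_c^n, V_p^n) ≠ g_n(Y^n)] → 0 and the secrecy metric S(C_n) = max_{v_c^n} V(p_{Z^n | V_c^n = v_c^n}, p_{Z^n}) → 0 as n → ∞. -/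
open Finset Filter Real

attribute [local instance] Classical.propDecidable

noncomputable section

/-- `p` is a probability mass function on the finite type `α`. -/
def IsPMF {α : Type*} [Fintype α] (p : α → ℝ) : Prop :=
  (∀ a, 0 ≤ p a) ∧ ∑ a, p a = 1

/-- i.i.d. (product) distribution of `n` copies of a source with pmf `p`. -/
def iid {α : Type*} [Fintype α] (p : α → ℝ) (n : ℕ) : (Fin n → α) → ℝ :=
  fun x => ∏ i, p (x i)

/-- variational distance between two pmfs -/
def VD {α : Type*} [Fintype α] (p q : α → ℝ) : ℝ := ∑ a, |p a - q a|

/-- Shannon entropy, base 2 -/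
def Hsh {α : Type*} [Fintype α] (p : α → ℝ) : ℝ := - ∑ a, p a * Real.logb 2 (p a)

/-- Rényi entropy of order 2, base 2 -/
def H2 {α : Type*} [Fintype α] (p : α → ℝ) : ℝ := - Real.logb 2 (∑ a, (p a) ^ 2)

/-- min-entropy, base 2 -/
def Hinf {α : Type*} [Fintype α] (p : α → ℝ) : ℝ := - Real.logb 2 (⨆ a, p a)

/-- Kullback–Leibler divergence, base 2 -/
def KL {α : Type*} [Fintype α] (p q : α → ℝ) : ℝ := ∑ a, p a * Real.logb 2 (p a / q a)

/-- pushforward of a pmf along a map -/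
def push {α β : Type*} [Fintype α] [Fintype β] (p : α → ℝ) (f : α → β) : β → ℝ :=
  fun b => ∑ a, if f a = b then p a else 0

/-- conditional mutual information `I(X;Y|Q)` of a joint pmf on `Q × X × Y`, base 2:
`I(X;Y|Q) = H(Q,X) + H(Q,Y) - H(Q) - H(Q,X,Y)`. -/
def condMI {Q X Y : Type*} [Fintype Q] [Fintype X] [Fintype Y] (p : Q × X × Y → ℝ) : ℝ :=
  Hsh (fun qx : Q × X => ∑ y, p (qx.1, qx.2, y))
    + Hsh (fun qy : Q × Y => ∑ x, p (qy.1, x, qy.2))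
    - Hsh (fun q : Q => ∑ x, ∑ y, p (q, x, y))
    - Hsh p

/-- the set of `ε`-letter-typical sequences of length `n` -/
def typ {α : Type*} [Fintype α] (p : α → ℝ) (n : ℕ) (ε : ℝ) : Finset (Fin n → α) :=
  Finset.univ.filter fun x =>
    ∀ a, |((Finset.univ.filter fun i => x i = a).card : ℝ) / n - p a| ≤ ε * p a

/-- cumulative distribution function of the standard normal distribution -/
def stdΦ (x : ℝ) : ℝ := ∫ t in Set.Iic x, Real.exp (-(t ^ 2) / 2) / Real.sqrt (2 * Real.pi)

/-- `⌈2^r⌉₊`, the size of a message set `{1,…,2^r}` -/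
def e2 (r : ℝ) : ℕ := ⌈(2:ℝ) ^ r⌉₊



lemma sum_pi_prod {ι A : Type*} [Fintype ι] [DecidableEq ι] [Fintype A] (h : ι → A → ℝ) :
    ∑ c : ι → A, ∏ i, h i (c i) = ∏ i, ∑ a, h i a := by
  rw [Finset.prod_univ_sum, Fintype.piFinset_univ]

lemma exp_two {ι A : Type*} [Fintype ι] [DecidableEq ι] [Fintype A] {K : A → ℝ} (hK : IsPMF K)
    {i j : ι} (hij : i ≠ j) (F G : A → ℝ) :
    ∑ c : ι → A, (∏ l, K (c l)) * (F (c i) * G (c j)) = (∑ a, K a * F a) * (∑ a, K a * G a) := by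
  have h1 : ∀ c : ι → A, (∏ l, K (c l)) * (F (c i) * G (c j)) =
      ∏ l, (fun (l : ι) (a : A) => K a * ((if l = i then F a else 1) * (if l = j then G a else 1))) l (c l) := by
    intro c
    simp only [Finset.prod_mul_distrib]
    congr 1
    rw [Finset.prod_ite_eq' Finset.univ i (fun l => F (c l)), Finset.prod_ite_eq' Finset.univ j (fun l => G (c l))]
    simp
  rw [Finset.sum_congr rfl (fun c _ => h1 c), sum_pi_prod (fun (l : ι) (a : A) => K a * ((if l = i then F a else 1) * (if l = j then G a else 1)))]
  have h2 : ∀ l : ι, ∑ a, (fun (l : ι) (a : A) => K a * ((if l = i then F a else 1) * (if l = j then G a else 1))) l a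
      = (if l = i then ∑ a, K a * F a else 1) * (if l = j then ∑ a, K a * G a else 1) := by
    intro l
    by_cases hi : l = i
    · have : l ≠ j := fun h => hij (hi ▸ h)
      simp [hi, hij]
    · by_cases hj : l = j
      · simp [hj, hij.symm]
      · simp [hi, hj, hK.2]
  rw [Finset.prod_congr rfl (fun l _ => h2 l), Finset.prod_mul_distrib, Finset.prod_ite_eq' Finset.univ i (fun _ => ∑ a, K a * F a),
    Finset.prod_ite_eq' Finset.univ j (fun _ => ∑ a, K a * G a)]
  simp

lemma exp_one {ι A : Type*} [Fintype ι] [DecidableEq ι] [Fintype A] {K : A → ℝ} (hK : IsPMF K)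
    (i : ι) (F : A → ℝ) :
    ∑ c : ι → A, (∏ l, K (c l)) * F (c i) = ∑ a, K a * F a := by
  have h1 : ∀ c : ι → A, (∏ l, K (c l)) * F (c i) =
      ∏ l, (fun (l : ι) (a : A) => K a * (if l = i then F a else 1)) l (c l) := by
    intro c
    simp only [Finset.prod_mul_distrib]
    congr 1
    rw [Finset.prod_ite_eq' Finset.univ i (fun l => F (c l))]
    simp
  rw [Finset.sum_congr rfl (fun c _ => h1 c), sum_pi_prod (fun (l : ι) (a : A) => K a * (if l = i then F a else 1))]
  have h2 : ∀ l : ι, ∑ a, (fun (l : ι) (a : A) => K a * (if l = i then F a else 1)) l a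
      = (if l = i then ∑ a, K a * F a else 1) := by
    intro l
    by_cases hi : l = i
    · simp [hi]
    · simp [hi, hK.2]
  rw [Finset.prod_congr rfl (fun l _ => h2 l), Finset.prod_ite_eq' Finset.univ i (fun _ => ∑ a, K a * F a)]
  simp

lemma pmf_pi {ι A : Type*} [Fintype ι] [DecidableEq ι] [Fintype A] {K : ι → A → ℝ}
    (hK : ∀ i, IsPMF (K i)) : IsPMF (fun c : ι → A => ∏ l, K l (c l)) := by
  refine ⟨fun c => Finset.prod_nonneg fun l _ => (hK l).1 _, ?_⟩
  rw [sum_pi_prod]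
  exact Finset.prod_eq_one fun i _ => (hK i).2

lemma var_sum {ι A : Type*} [Fintype ι] [DecidableEq ι] [Fintype A] {K : A → ℝ} (hK : IsPMF K)
    (H : ι → A → ℝ) (hH : ∀ i, ∑ a, K a * H i a = 0) :
    ∑ c : ι → A, (∏ l, K (c l)) * (∑ i, H i (c i)) ^ 2 = ∑ i, ∑ a, K a * (H i a) ^ 2 := by
  have h1 : ∀ c : ι → A, (∏ l, K (c l)) * (∑ i, H i (c i)) ^ 2 =
      ∑ i, ∑ j, (∏ l, K (c l)) * (H i (c i) * H j (c j)) := by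
    intro c
    rw [sq, Finset.sum_mul_sum, Finset.mul_sum]
    simp_rw [Finset.mul_sum]
  rw [Finset.sum_congr rfl (fun c _ => h1 c), Finset.sum_comm]
  refine Finset.sum_congr rfl fun i _ => ?_
  rw [Finset.sum_comm, Finset.sum_eq_single i]
  · rw [← exp_one hK i (fun a => (H i a) ^ 2)]
    simp only [sq]
  · intro j _ hj
    rw [exp_two hK hj.symm, hH i, zero_mul]
  · simp

lemma jensen_sq {C : Type*} [Fintype C] {P : C → ℝ} (hP : IsPMF P) (f : C → ℝ) {t : ℝ} (ht : 0 ≤ t)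
    (h : ∑ c, P c * (f c) ^ 2 ≤ t ^ 2) : ∑ c, P c * |f c| ≤ t := by
  set μ := ∑ c, P c * |f c| with hμ
  have h0 : 0 ≤ ∑ c, P c * (|f c| - μ) ^ 2 :=
    Finset.sum_nonneg fun c _ => mul_nonneg (hP.1 c) (sq_nonneg _)
  have h1 : ∑ c, P c * (|f c| - μ) ^ 2 = ∑ c, P c * (f c) ^ 2 - μ ^ 2 := by
    have : ∀ c, P c * (|f c| - μ) ^ 2 = P c * (f c) ^ 2 - 2 * μ * (P c * |f c|) + μ ^ 2 * P c := by
      intro c; rw [← sq_abs (f c)]; ring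
    rw [Finset.sum_congr rfl (fun c _ => this c), Finset.sum_add_distrib, Finset.sum_sub_distrib,
      ← Finset.mul_sum, ← Finset.mul_sum, hP.2, ← hμ]
    ring
  exact abs_le_of_sq_le_sq' (by linarith) ht |>.2

/-- Soft covering with non-uniform weights. -/
lemma cov_bound {M S A C : Type*} [Fintype M] [Fintype S] [Fintype A] [Fintype C]
    [DecidableEq (M × S)]
    {K : A → ℝ} (hK : IsPMF K) {s : S → ℝ} (hs : IsPMF s) {WZ : A → C → ℝ} (hW : ∀ a, IsPMF (WZ a))
    (T : Finset S) {σ G : ℝ} (hσ : 0 ≤ σ) (hG : 0 ≤ G) (hT : ∀ v ∈ T, s v ≤ σ) (m : M) :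
    ∑ c : M × S → A, (∏ l, K (c l)) * (∑ z, |∑ v, s v * WZ (c (m, v)) z - ∑ a, K a * WZ a z|)
     ≤ 2 * (∑ v, s v * (if v ∈ T then 0 else 1)) +
       2 * (∑ a, K a * ∑ z, WZ a z * (if WZ a z ≤ G * ∑ a', K a' * WZ a' z then 0 else 1)) +
       √(σ * G) := by
  set R : C → ℝ := fun z => ∑ a, K a * WZ a z with hR
  set w : A → C → ℝ := fun a z => WZ a z * (if WZ a z ≤ G * R z then 1 else 0) with hw
  set r : C → ℝ := fun z => ∑ a, K a * w a z with hr
  set t : S → ℝ := fun v => s v * (if v ∈ T then 1 else 0) with ht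
  set P : (M × S → A) → ℝ := fun c => ∏ l, K (c l) with hPdef
  have hP : IsPMF P := pmf_pi (fun _ => hK)
  have hW0 : ∀ a z, 0 ≤ WZ a z := fun a z => (hW a).1 z
  have hw0 : ∀ a z, 0 ≤ w a z := fun a z => mul_nonneg (hW0 a z) (by split_ifs <;> norm_num)
  have hwW : ∀ a z, w a z ≤ WZ a z := fun a z => by
    simp only [hw]; split_ifs <;> simp [hW0]
  have hwG : ∀ a z, w a z ^ 2 ≤ G * R z * w a z := fun a z => by
    simp only [hw]
    split_ifs with h
    · have := hW0 a z; rw [mul_one]; nlinarith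
    · simp
  have hR0 : ∀ z, 0 ≤ R z := fun z => Finset.sum_nonneg fun a _ => mul_nonneg (hK.1 a) (hW0 a z)
  have hr0 : ∀ z, 0 ≤ r z := fun z => Finset.sum_nonneg fun a _ => mul_nonneg (hK.1 a) (hw0 a z)
  have hrR : ∀ z, r z ≤ R z := fun z => Finset.sum_le_sum fun a _ => mul_le_mul_of_nonneg_left (hwW a z) (hK.1 a)
  have ht0 : ∀ v, 0 ≤ t v := fun v => mul_nonneg (hs.1 v) (by split_ifs <;> norm_num)
  have hts : ∀ v, t v ≤ s v := fun v => by simp only [ht]; split_ifs <;> simp [hs.1]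
  have htσ : ∀ v, t v ^ 2 ≤ σ * s v := fun v => by
    simp only [ht]
    split_ifs with h
    · have := hs.1 v; have := hT v h; rw [mul_one]; nlinarith
    · simpa using mul_nonneg hσ (hs.1 v)
  have hRs : ∑ z, R z = 1 := by
    simp only [hR]
    rw [Finset.sum_comm]
    simp_rw [← Finset.mul_sum, (hW _).2, mul_one, hK.2]
  set sT := ∑ v, t v with hsT
  have hsT1 : sT ≤ 1 := by rw [← hs.2]; exact Finset.sum_le_sum fun v _ => hts v
  have hsT0 : 0 ≤ sT := Finset.sum_nonneg fun v _ => ht0 v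
  have e1 : ∑ v, s v * (if v ∈ T then (0:ℝ) else 1) = 1 - sT := by
    rw [eq_sub_iff_add_eq, hsT, ← Finset.sum_add_distrib]
    conv_rhs => rw [← hs.2]
    refine Finset.sum_congr rfl fun v _ => ?_
    simp only [ht]; split_ifs <;> ring
  have e2 : (∑ a, K a * ∑ z, WZ a z * (if WZ a z ≤ G * R z then (0:ℝ) else 1)) = 1 - ∑ z, r z := by
    have : ∀ a, ∑ z, WZ a z * (if WZ a z ≤ G * R z then (0:ℝ) else 1) = 1 - ∑ z, w a z := by
      intro a
      rw [eq_sub_iff_add_eq, ← Finset.sum_add_distrib]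
      conv_rhs => rw [← (hW a).2]
      refine Finset.sum_congr rfl fun z _ => ?_
      simp only [hw]; split_ifs <;> ring
    simp_rw [this, mul_sub, mul_one, Finset.sum_sub_distrib, hK.2, hr]
    congr 1
    rw [Finset.sum_comm]
    simp_rw [Finset.mul_sum]
  rw [e1, e2]
  have hz : ∀ z, ∑ c, P c * |∑ v, s v * WZ (c (m, v)) z - R z| ≤
      √(σ * G) * R z + 2 * (R z - sT * r z) := by
    intro z
    have hA : ∑ c, P c * |∑ v, t v * (w (c (m, v)) z - r z)| ≤ √(σ * G) * R z := by
      refine jensen_sq hP _ (mul_nonneg (Real.sqrt_nonneg _) (hR0 z)) ?_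
      have hv := var_sum hK (fun (i : M × S) a => if i.1 = m then t i.2 * (w a z - r z) else 0) (by
        intro i
        split_ifs
        · have : ∀ a, K a * (t i.2 * (w a z - r z)) = t i.2 * (K a * w a z) - t i.2 * r z * K a := by
            intro a; ring
          rw [Finset.sum_congr rfl (fun a _ => this a), Finset.sum_sub_distrib, ← Finset.mul_sum,
            ← Finset.mul_sum, hK.2]
          simp [hr]
        · simp)
      have hs1 : ∀ c : M × S → A, ∑ i : M × S, (if i.1 = m then t i.2 * (w (c i) z - r z) else 0)
          = ∑ v, t v * (w (c (m, v)) z - r z) := by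
        intro c
        rw [Fintype.sum_prod_type, Finset.sum_eq_single m]
        · simp
        · intro b _ hb; simp [hb]
        · simp
      simp only [hs1] at hv
      rw [hv, Fintype.sum_prod_type, Finset.sum_eq_single m]
      · simp only [if_true]
        have h1 : ∀ v, ∑ a, K a * (t v * (w a z - r z)) ^ 2 ≤ σ * s v * (G * R z * R z) := by
          intro v
          have h2 : ∑ a, K a * (w a z - r z) ^ 2 ≤ G * R z * R z := by
            have : ∀ a, K a * (w a z - r z) ^ 2 = K a * w a z ^ 2 - 2 * r z * (K a * w a z) + r z ^ 2 * K a := by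
              intro a; ring
            rw [Finset.sum_congr rfl (fun a _ => this a), Finset.sum_add_distrib, Finset.sum_sub_distrib,
              ← Finset.mul_sum, ← Finset.mul_sum, hK.2]
            have h3 : ∑ a, K a * w a z ^ 2 ≤ G * R z * r z := by
              simp only [hr]
              rw [Finset.mul_sum]
              refine Finset.sum_le_sum fun a _ => ?_
              have := mul_le_mul_of_nonneg_left (hwG a z) (hK.1 a)
              nlinarith
            have h4 : G * R z * r z ≤ G * R z * R z := mul_le_mul_of_nonneg_left (hrR z) (mul_nonneg hG (hR0 z))
            have h5 : ∑ a, K a * w a z = r z := rfl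
            rw [h5]
            nlinarith [sq_nonneg (r z)]
          have h6 : ∑ a, K a * (t v * (w a z - r z)) ^ 2 = t v ^ 2 * ∑ a, K a * (w a z - r z) ^ 2 := by
            rw [Finset.mul_sum]; refine Finset.sum_congr rfl fun a _ => by ring
          rw [h6]
          exact mul_le_mul (htσ v) h2 (Finset.sum_nonneg fun a _ => mul_nonneg (hK.1 a) (sq_nonneg _))
            (mul_nonneg hσ (hs.1 v))
        refine (Finset.sum_le_sum fun v _ => h1 v).trans ?_
        rw [← Finset.sum_mul, ← Finset.mul_sum, hs.2, mul_pow, Real.sq_sqrt (mul_nonneg hσ hG)]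
        apply le_of_eq; ring
      · intro b _ hb; simp [hb]
      · simp
    have hB : ∑ c, P c * (∑ v, (s v * WZ (c (m, v)) z - t v * w (c (m, v)) z)) = R z - sT * r z := by
      simp_rw [Finset.mul_sum]
      rw [Finset.sum_comm]
      have : ∀ v, ∑ c, P c * (s v * WZ (c (m, v)) z - t v * w (c (m, v)) z) = s v * R z - t v * r z := by
        intro v
        rw [exp_one hK (m, v) (fun a => s v * WZ a z - t v * w a z)]
        simp only [hR, hr, Finset.mul_sum, ← Finset.sum_sub_distrib]
        refine Finset.sum_congr rfl fun a _ => by ring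
      rw [Finset.sum_congr rfl (fun v _ => this v), Finset.sum_sub_distrib, ← Finset.sum_mul, ← Finset.sum_mul, hs.2, one_mul]
    have hD : ∀ c : M × S → A, |∑ v, s v * WZ (c (m, v)) z - R z| ≤
        |∑ v, t v * (w (c (m, v)) z - r z)| + (∑ v, (s v * WZ (c (m, v)) z - t v * w (c (m, v)) z))
         + (R z - sT * r z) := by
      intro c
      have h1 : ∑ v, s v * WZ (c (m, v)) z - R z = (∑ v, t v * (w (c (m, v)) z - r z))
          + ((∑ v, (s v * WZ (c (m, v)) z - t v * w (c (m, v)) z)) - (R z - sT * r z)) := by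
        simp_rw [mul_sub, Finset.sum_sub_distrib, ← Finset.sum_mul]
        ring
      have h2 : 0 ≤ ∑ v, (s v * WZ (c (m, v)) z - t v * w (c (m, v)) z) :=
        Finset.sum_nonneg fun v _ => sub_nonneg.2 (mul_le_mul (hts v) (hwW _ _) (hw0 _ _) (hs.1 v))
      have h3 : 0 ≤ R z - sT * r z := by
        have := hr0 z; have := hrR z; nlinarith
      rw [h1]
      refine (abs_add_le _ _).trans ?_
      have := abs_sub (∑ v, (s v * WZ (c (m, v)) z - t v * w (c (m, v)) z)) (R z - sT * r z)
      rw [add_assoc]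
      refine add_le_add le_rfl ?_
      rw [abs_le]; constructor <;> linarith
    calc ∑ c, P c * |∑ v, s v * WZ (c (m, v)) z - R z| ≤ ∑ c, (P c * |∑ v, t v * (w (c (m, v)) z - r z)|
          + P c * (∑ v, (s v * WZ (c (m, v)) z - t v * w (c (m, v)) z)) + (R z - sT * r z) * P c) := by
          refine Finset.sum_le_sum fun c _ => ?_
          have := mul_le_mul_of_nonneg_left (hD c) (hP.1 c)
          linarith
      _ ≤ _ := by
          rw [Finset.sum_add_distrib, Finset.sum_add_distrib, hB, ← Finset.mul_sum, hP.2]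
          linarith
  have hrs : ∑ z, r z ≤ 1 := by rw [← hRs]; exact Finset.sum_le_sum fun z _ => hrR z
  calc ∑ c, P c * (∑ z, |∑ v, s v * WZ (c (m, v)) z - R z|)
      = ∑ z, ∑ c, P c * |∑ v, s v * WZ (c (m, v)) z - R z| := by
        simp_rw [Finset.mul_sum]; rw [Finset.sum_comm]
    _ ≤ ∑ z, (√(σ * G) * R z + 2 * (R z - sT * r z)) := Finset.sum_le_sum fun z _ => hz z
    _ = √(σ * G) + 2 * (1 - sT * ∑ z, r z) := by
        rw [Finset.sum_add_distrib, ← Finset.mul_sum, ← Finset.mul_sum, Finset.sum_sub_distrib, ← Finset.mul_sum, hRs]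
        ring
    _ ≤ _ := by nlinarith [mul_nonneg (sub_nonneg.2 hsT1) (sub_nonneg.2 hrs)]

/-- threshold decoder -/
def decOf {I A B : Type*} (good : A → B → Prop) (T : Finset I) (i0 : I) (c : I → A) (b : B) : I :=
  if h : ∃ i ∈ T, good (c i) b then Classical.choose h else i0

lemma dec_err {I A B : Type*} [DecidableEq I] (good : A → B → Prop) (T : Finset I) (i0 : I)
    (c : I → A) (b : B) (i : I) (hi : i ∈ T) :
    (if decOf good T i0 c b = i then (0:ℝ) else 1) ≤
      (if good (c i) b then 0 else 1) + ∑ j ∈ T, if j ≠ i ∧ good (c j) b then 1 else 0 := by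
  have hs : ∀ j ∈ T, (0:ℝ) ≤ if j ≠ i ∧ good (c j) b then 1 else 0 := by
    intro j _; split_ifs <;> norm_num
  have hs' := Finset.sum_nonneg hs
  by_cases hd : decOf good T i0 c b = i
  · rw [if_pos hd]
    have : (0:ℝ) ≤ (if good (c i) b then 0 else 1) := by split_ifs <;> norm_num
    linarith
  · rw [if_neg hd]
    by_cases hg : good (c i) b
    · rw [if_pos hg, zero_add]
      have hex : ∃ i ∈ T, good (c i) b := ⟨i, hi, hg⟩
      have hc := Classical.choose_spec hex
      have he : decOf good T i0 c b = Classical.choose hex := by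
        simp only [decOf, dif_pos hex]
      rw [← he] at hc
      have := Finset.single_le_sum hs hc.1
      rw [if_pos ⟨hd, hc.2⟩] at this
      exact this
    · rw [if_neg hg]; linarith

lemma err_one {I A B : Type*} [Fintype I] [DecidableEq I] [Fintype A] [Fintype B]
    {K : A → ℝ} (hK : IsPMF K) {WY : A → B → ℝ} (hW : ∀ a, IsPMF (WY a))
    (T : Finset I) (i0 : I) {G : ℝ} (hG : 0 < G) (i : I) (hi : i ∈ T) :
    ∑ c : I → A, (∏ l, K (c l)) * ∑ b, WY (c i) b *
      (if decOf (fun a b => G * (∑ a', K a' * WY a' b) < WY a b) T i0 c b = i then 0 else 1)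
    ≤ (∑ a, K a * ∑ b, WY a b * (if G * (∑ a', K a' * WY a' b) < WY a b then 0 else 1))
      + T.card * G⁻¹ := by
  set P : B → ℝ := fun b => ∑ a, K a * WY a b with hP
  set good : A → B → Prop := fun a b => G * P b < WY a b with hgood
  have hW0 : ∀ a z, 0 ≤ WY a z := fun a z => (hW a).1 z
  have hPs : ∑ z, P z = 1 := by
    simp only [hP]
    rw [Finset.sum_comm]
    simp_rw [← Finset.mul_sum, (hW _).2, mul_one, hK.2]
  have hP0 : ∀ z, 0 ≤ P z := fun z => Finset.sum_nonneg fun a _ => mul_nonneg (hK.1 a) (hW0 a z)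
  have hQ0 : ∀ c : I → A, 0 ≤ ∏ l, K (c l) := fun c => Finset.prod_nonneg fun l _ => hK.1 _
  have hpair : ∀ j ∈ T, ∑ c : I → A, (∏ l, K (c l)) * ∑ b, WY (c i) b * (if j ≠ i ∧ good (c j) b then 1 else 0)
      ≤ G⁻¹ := by
    intro j _
    by_cases hj : j = i
    · simp [hj, hG.le]
    · simp_rw [Finset.mul_sum]
      rw [Finset.sum_comm]
      have h1 : ∀ b, ∑ c : I → A, (∏ l, K (c l)) * (WY (c i) b * (if j ≠ i ∧ good (c j) b then 1 else 0))
          ≤ G⁻¹ * P b := by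
        intro b
        have h2 := exp_two hK (Ne.symm hj) (fun a => WY a b) (fun a => if j ≠ i ∧ good a b then 1 else 0)
        have h5 : G⁻¹ * P b = ∑ a, G⁻¹ * (K a * WY a b) := Finset.mul_sum _ _ _
        rw [h2, Finset.mul_sum, h5]
        refine Finset.sum_le_sum fun a _ => ?_
        change P b * _ ≤ _
        have hk := hK.1 a
        split_ifs with h
        · have h3 : G * P b < WY a b := h.2
          have h4 : P b ≤ G⁻¹ * WY a b := by
            rw [inv_mul_eq_div, le_div_iff₀ hG]; linarith
          nlinarith
        · have := mul_nonneg hk (hW0 a b)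
          simp only [mul_zero]
          positivity
      refine (Finset.sum_le_sum fun b _ => h1 b).trans ?_
      rw [← Finset.mul_sum, hPs, mul_one]
  have hfirst := exp_one hK i (fun a => ∑ b, WY a b * (if good a b then 0 else 1))
  calc _ ≤ ∑ c : I → A, ((∏ l, K (c l)) * (∑ b, WY (c i) b * (if good (c i) b then 0 else 1)) +
        ∑ j ∈ T, (∏ l, K (c l)) * ∑ b, WY (c i) b * (if j ≠ i ∧ good (c j) b then 1 else 0)) := by
        refine Finset.sum_le_sum fun c _ => ?_
        rw [← Finset.mul_sum, ← mul_add]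
        refine mul_le_mul_of_nonneg_left ?_ (hQ0 c)
        rw [Finset.sum_comm, ← Finset.sum_add_distrib]
        refine Finset.sum_le_sum fun b _ => ?_
        rw [← Finset.mul_sum, ← mul_add]
        exact mul_le_mul_of_nonneg_left (dec_err good T i0 c b i hi) (hW0 _ _)
    _ ≤ _ := by
        rw [Finset.sum_add_distrib, hfirst, Finset.sum_comm]
        refine add_le_add le_rfl ?_
        refine (Finset.sum_le_sum hpair).trans ?_
        simp

lemma err_bound {M S A B : Type*} [Fintype M] [Fintype S] [Fintype A] [Fintype B]
    [DecidableEq (M × S)]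
    {K : A → ℝ} (hK : IsPMF K) {s : S → ℝ} (hs : IsPMF s) {WY : A → B → ℝ} (hW : ∀ a, IsPMF (WY a))
    (T : Finset S) (i0 : M × S) {G : ℝ} (hG : 0 < G) (m : M) :
    ∑ c : M × S → A, (∏ l, K (c l)) * ∑ v, s v * ∑ b, WY (c (m, v)) b *
      (if decOf (fun a b => G * (∑ a', K a' * WY a' b) < WY a b) (Finset.univ ×ˢ T) i0 c b = (m, v)
        then 0 else 1)
    ≤ (∑ v, s v * (if v ∈ T then 0 else 1)) +
      (∑ a, K a * ∑ b, WY a b * (if G * (∑ a', K a' * WY a' b) < WY a b then 0 else 1))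
      + (Fintype.card M * T.card) * G⁻¹ := by
  have hW0 : ∀ a z, 0 ≤ WY a z := fun a z => (hW a).1 z
  set α := (∑ a, K a * ∑ b, WY a b * (if G * (∑ a', K a' * WY a' b) < WY a b then (0:ℝ) else 1)) with hα
  have hα0 : 0 ≤ α := Finset.sum_nonneg fun a _ => mul_nonneg (hK.1 a) (Finset.sum_nonneg fun b _ =>
    mul_nonneg (hW0 a b) (by split_ifs <;> norm_num))
  have hX0 : 0 ≤ ((Fintype.card M : ℝ) * T.card) * G⁻¹ := by positivity
  set X := ((Fintype.card M : ℝ) * T.card) * G⁻¹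
  simp_rw [Finset.mul_sum (s := Finset.univ) (f := fun v : S => _)]
  rw [Finset.sum_comm]
  have hPQ : IsPMF (fun c : M × S → A => ∏ l, K (c l)) := pmf_pi (fun _ => hK)
  have key : ∀ v, ∑ c : M × S → A, (∏ l, K (c l)) * (s v * ∑ b, WY (c (m, v)) b *
      (if decOf (fun a b => G * (∑ a', K a' * WY a' b) < WY a b) (Finset.univ ×ˢ T) i0 c b = (m, v)
        then 0 else 1)) ≤ s v * (if v ∈ T then 0 else 1) + s v * (α + X) := by
    intro v
    have h0 := hs.1 v
    have e : ∑ c : M × S → A, (∏ l, K (c l)) * (s v * ∑ b, WY (c (m, v)) b *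
      (if decOf (fun a b => G * (∑ a', K a' * WY a' b) < WY a b) (Finset.univ ×ˢ T) i0 c b = (m, v)
        then 0 else 1)) = s v * ∑ c : M × S → A, (∏ l, K (c l)) * (∑ b, WY (c (m, v)) b *
      (if decOf (fun a b => G * (∑ a', K a' * WY a' b) < WY a b) (Finset.univ ×ˢ T) i0 c b = (m, v)
        then 0 else 1)) := by
      rw [Finset.mul_sum]
      exact Finset.sum_congr rfl fun c _ => by ring
    rw [e, ← mul_add]
    refine mul_le_mul_of_nonneg_left ?_ h0
    by_cases hv : v ∈ T
    · have := err_one hK hW (Finset.univ ×ˢ T) i0 hG (m, v) (by simp [hv])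
      rw [if_pos hv, zero_add]
      refine this.trans (add_le_add le_rfl (le_of_eq ?_))
      simp [X]
    · rw [if_neg hv]
      refine le_trans (b := (1:ℝ)) ?_ (by linarith)
      refine le_of_le_of_eq (Finset.sum_le_sum fun c _ => ?_) hPQ.2
      refine mul_le_of_le_one_right (hPQ.1 c) ?_
      refine le_of_le_of_eq (Finset.sum_le_sum fun b _ => mul_le_of_le_one_right (hW0 _ _) ?_) (hW (c (m, v))).2
      split_ifs <;> norm_num
  refine (Finset.sum_le_sum fun v _ => key v).trans ?_
  rw [Finset.sum_add_distrib, ← Finset.sum_mul, hs.2]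
  linarith

lemma exists_le_avg {C : Type*} [Fintype C] {P : C → ℝ} (hP : IsPMF P) (f : C → ℝ) {t : ℝ}
    (h : ∑ c, P c * f c ≤ t) : ∃ c, f c ≤ t := by
  by_contra hcon
  push Not at hcon
  have : ∑ c, P c * t < ∑ c, P c * f c := by
    have hne : ∃ c ∈ Finset.univ, P c * t < P c * f c := by
      by_contra hn
      push Not at hn
      have h0 : ∀ c, P c = 0 := by
        intro c
        by_contra hc
        have hc' : 0 < P c := lt_of_le_of_ne (hP.1 c) (Ne.symm hc)
        have := hn c (Finset.mem_univ _)
        have := mul_lt_mul_of_pos_left (hcon c) hc'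
        linarith
      have := hP.2
      simp [h0] at this
    exact Finset.sum_lt_sum (fun c _ => mul_le_mul_of_nonneg_left (hcon c).le (hP.1 c)) hne
  rw [← Finset.sum_mul, hP.2, one_mul] at this
  linarith

/-- one-shot theorem, random coding plus expurgation -/
lemma one_shot {Θ S A B C : Type*} [Fintype Θ] [Fintype S] [Fintype A] [Fintype B] [Fintype C]
    (N : ℕ) (hN : 0 < N) {ρ : Θ → ℝ} (hρ : IsPMF ρ)
    {K : Θ → A → ℝ} (hK : ∀ q, IsPMF (K q)) {s : S → ℝ} (hs : IsPMF s)
    {WY : A → B → ℝ} (hWY : ∀ a, IsPMF (WY a)) {WZ : A → C → ℝ} (hWZ : ∀ a, IsPMF (WZ a))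
    (T : Finset S) {σ G G' : ℝ} (hσ : 0 ≤ σ) (hG : 0 < G) (hG' : 0 ≤ G') (hT : ∀ v ∈ T, s v ≤ σ)
    (ε : ℝ)
    (hε : 3 * (∑ v, s v * (if v ∈ T then 0 else 1)) +
      (∑ q, ρ q * ∑ a, K q a * ∑ b, WY a b * (if G * (∑ a', K q a' * WY a' b) < WY a b then 0 else 1))
      + 2 * (∑ q, ρ q * ∑ a, K q a * ∑ z, WZ a z * (if WZ a z ≤ G' * ∑ a', K q a' * WZ a' z then 0 else 1))
      + (2 * N * T.card) * G⁻¹ + √(σ * G') ≤ ε) :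
    ∃ (c : Fin (2 * N) × S → A) (dec : B → Fin (2 * N) × S) (R : C → ℝ) (Good : Finset (Fin (2 * N))),
      N ≤ Good.card ∧ ∀ m ∈ Good,
        (∑ v, s v * ∑ b, WY (c (m, v)) b * (if dec b = (m, v) then 0 else 1)) ≤ 2 * ε ∧
        (∑ z, |∑ v, s v * WZ (c (m, v)) z - R z|) ≤ 2 * ε := by
  have hSne : Nonempty S := by
    by_contra h
    rw [not_nonempty_iff] at h
    have := hs.2
    simp at this
  obtain ⟨s0⟩ := hSne
  let i0 : Fin (2 * N) × S := (⟨0, by omega⟩, s0)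
  let D : Θ → (Fin (2 * N) × S → A) → B → Fin (2 * N) × S := fun q c b =>
    decOf (fun a b => G * (∑ a', K q a' * WY a' b) < WY a b) (Finset.univ ×ˢ T) i0 c b
  let Er : Θ → (Fin (2 * N) × S → A) → Fin (2 * N) → ℝ := fun q c m =>
    ∑ v, s v * ∑ b, WY (c (m, v)) b * (if D q c b = (m, v) then 0 else 1)
  let Sc : Θ → (Fin (2 * N) × S → A) → Fin (2 * N) → ℝ := fun q c m =>
    ∑ z, |∑ v, s v * WZ (c (m, v)) z - ∑ a, K q a * WZ a z|
  have hEr0 : ∀ q c m, 0 ≤ Er q c m := fun q c m =>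
    Finset.sum_nonneg fun v _ => mul_nonneg (hs.1 v) (Finset.sum_nonneg fun b _ =>
      mul_nonneg ((hWY _).1 b) (by split_ifs <;> norm_num))
  have hSc0 : ∀ q c m, 0 ≤ Sc q c m := fun q c m => Finset.sum_nonneg fun z _ => abs_nonneg _
  set τ := (∑ v, s v * (if v ∈ T then (0:ℝ) else 1))
  let α : Θ → ℝ := fun q =>
    ∑ a, K q a * ∑ b, WY a b * (if G * (∑ a', K q a' * WY a' b) < WY a b then 0 else 1)
  let β : Θ → ℝ := fun q =>
    ∑ a, K q a * ∑ z, WZ a z * (if WZ a z ≤ G' * ∑ a', K q a' * WZ a' z then 0 else 1)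
  have hq : ∀ q, ∑ c : Fin (2 * N) × S → A, (∏ l, K q (c l)) * ∑ m, (Er q c m + Sc q c m) ≤
      (2 * N) * (3 * τ + α q + 2 * β q + (2 * N * T.card) * G⁻¹ + √(σ * G')) := by
    intro q
    have hm : ∀ m, ∑ c : Fin (2 * N) × S → A, (∏ l, K q (c l)) * (Er q c m + Sc q c m) ≤
        3 * τ + α q + 2 * β q + (2 * N * T.card) * G⁻¹ + √(σ * G') := by
      intro m
      have h1 := err_bound (hK q) hs hWY T i0 hG m
      have h2 := cov_bound (hK q) hs hWZ T hσ hG' hT m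
      simp_rw [mul_add]
      rw [Finset.sum_add_distrib]
      refine (add_le_add h1 h2).trans (le_of_eq ?_)
      simp only [Fintype.card_fin, Nat.cast_mul, Nat.cast_ofNat]
      simp only [τ, α, β]
      ring
    simp_rw [Finset.mul_sum (s := Finset.univ) (f := fun m : Fin (2 * N) => _)]
    rw [Finset.sum_comm]
    refine (Finset.sum_le_sum fun m _ => hm m).trans (le_of_eq ?_)
    simp
    ring
  obtain ⟨q, hq1⟩ : ∃ q, ∑ c : Fin (2 * N) × S → A, (∏ l, K q (c l)) * ∑ m, (Er q c m + Sc q c m)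
      ≤ (2 * N) * ε := by
    refine exists_le_avg hρ _ ?_
    refine (Finset.sum_le_sum fun q _ => mul_le_mul_of_nonneg_left (hq q) (hρ.1 q)).trans ?_
    have e : ∑ q, ρ q * ((2 * N) * (3 * τ + α q + 2 * β q + (2 * N * T.card) * G⁻¹ + √(σ * G')))
        = (2 * N) * (3 * τ + (∑ q, ρ q * α q) + 2 * (∑ q, ρ q * β q)
          + (2 * N * T.card) * G⁻¹ + √(σ * G')) := by
      have : ∀ q, ρ q * ((2 * N) * (3 * τ + α q + 2 * β q + (2 * N * T.card) * G⁻¹ + √(σ * G')))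
        = ((2 * N) * (3 * τ + (2 * N * T.card) * G⁻¹ + √(σ * G'))) * ρ q
          + (2 * N) * (ρ q * α q) + (2 * N * 2) * (ρ q * β q) := by intro q; ring
      rw [Finset.sum_congr rfl (fun q _ => this q), Finset.sum_add_distrib, Finset.sum_add_distrib,
        ← Finset.mul_sum, ← Finset.mul_sum, ← Finset.mul_sum, hρ.2]
      ring
    rw [e]
    exact mul_le_mul_of_nonneg_left hε (by positivity)
  obtain ⟨c, hc⟩ := exists_le_avg (pmf_pi (fun _ => hK q)) _ hq1
  refine ⟨c, D q c, fun z => ∑ a, K q a * WZ a z,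
    Finset.univ.filter (fun m => Er q c m + Sc q c m ≤ 2 * ε), ?_, ?_⟩
  · by_contra hlt
    push Not at hlt
    set Gd := Finset.univ.filter (fun m => Er q c m + Sc q c m ≤ 2 * ε) with hGd
    set Bd := Finset.univ.filter (fun m => ¬ (Er q c m + Sc q c m ≤ 2 * ε)) with hBd
    have hcard : Gd.card + Bd.card = 2 * N := by
      have := Finset.card_filter_add_card_filter_not (s := (Finset.univ : Finset (Fin (2 * N))))
        (fun m => Er q c m + Sc q c m ≤ 2 * ε)
      rw [Finset.card_univ, Fintype.card_fin] at this
      exact this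
    have hB : N < Bd.card := by omega
    have hB0 : Bd.Nonempty := by rw [← Finset.card_pos]; omega
    have h1 : ∑ m ∈ Bd, 2 * ε < ∑ m ∈ Bd, (Er q c m + Sc q c m) :=
      Finset.sum_lt_sum_of_nonempty hB0 fun m hm => not_le.1 (Finset.mem_filter.1 hm).2
    have h2 : ∑ m ∈ Bd, (Er q c m + Sc q c m) ≤ ∑ m, (Er q c m + Sc q c m) :=
      Finset.sum_le_sum_of_subset_of_nonneg (Finset.subset_univ _)
        fun m _ _ => add_nonneg (hEr0 q c m) (hSc0 q c m)
    rw [Finset.sum_const, nsmul_eq_mul] at h1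
    have h3 : 0 ≤ ∑ m, (Er q c m + Sc q c m) :=
      Finset.sum_nonneg fun m _ => add_nonneg (hEr0 q c m) (hSc0 q c m)
    have hε0 : 0 ≤ ε := by
      have hN' : (0:ℝ) < N := by exact_mod_cast hN
      by_contra hneg
      nlinarith
    have hB' : (N:ℝ) ≤ Bd.card := by exact_mod_cast hB.le
    nlinarith
  · intro m hm
    have hm := (Finset.mem_filter.1 hm).2
    exact ⟨by linarith [hSc0 q c m], by linarith [hEr0 q c m]⟩

lemma code_shot {Θ S Sc A B C : Type*} [Fintype Θ] [Fintype S] [Fintype Sc] [Fintype A] [Fintype B] [Fintype C]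
    (N : ℕ) (hN : 0 < N) {ρ : Θ → ℝ} (hρ : IsPMF ρ)
    {K : Θ → A → ℝ} (hK : ∀ q, IsPMF (K q)) {s : S → ℝ} (hs : IsPMF s) {sc : Sc → ℝ} (hsc : IsPMF sc)
    {WY : A → B → ℝ} (hWY : ∀ a, IsPMF (WY a)) {WZ : A → C → ℝ} (hWZ : ∀ a, IsPMF (WZ a))
    (Tc : Finset Sc) (hTc : Tc.card ≤ N)
    (T : Finset S) {σ G G' : ℝ} (hσ : 0 ≤ σ) (hG : 0 < G) (hG' : 0 ≤ G') (hT : ∀ v ∈ T, s v ≤ σ)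
    (ε : ℝ)
    (hε : 3 * (∑ v, s v * (if v ∈ T then 0 else 1)) +
      (∑ q, ρ q * ∑ a, K q a * ∑ b, WY a b * (if G * (∑ a', K q a' * WY a' b) < WY a b then 0 else 1))
      + 2 * (∑ q, ρ q * ∑ a, K q a * ∑ z, WZ a z * (if WZ a z ≤ G' * ∑ a', K q a' * WZ a' z then 0 else 1))
      + (2 * N * T.card) * G⁻¹ + √(σ * G') ≤ ε) :
    ∃ (f : Sc × S → A) (g : B → Sc × S),
      (∑ vc, sc vc * ∑ v, s v * ∑ b, WY (f (vc, v)) b * (if g b = (vc, v) then 0 else 1))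
        ≤ (∑ vc, sc vc * (if vc ∈ Tc then 0 else 1)) + 2 * ε ∧
      ∀ vc, (∑ z, |∑ v, s v * WZ (f (vc, v)) z - ∑ vc', sc vc' * ∑ v, s v * WZ (f (vc', v)) z|) ≤ 4 * ε := by
  obtain ⟨c, dec, R, Good, hcard, hgood⟩ := one_shot N hN hρ hK hs hWY hWZ T hσ hG hG' hT ε hε
  have hSne : Nonempty Sc := by
    by_contra h
    rw [not_nonempty_iff] at h
    have := hsc.2
    simp at this
  obtain ⟨s0⟩ := hSne
  have hGne : Good.Nonempty := by rw [← Finset.card_pos]; omega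
  obtain ⟨m0, hm0⟩ := hGne
  have hemb : Nonempty (Tc ↪ Good) :=
    Function.Embedding.nonempty_of_card_le (by simp only [Fintype.card_coe]; omega)
  obtain ⟨e⟩ := hemb
  let φ : Sc → Fin (2 * N) := fun vc => if h : vc ∈ Tc then (e ⟨vc, h⟩ : Fin (2 * N)) else m0
  have hφG : ∀ vc, φ vc ∈ Good := by
    intro vc
    by_cases h : vc ∈ Tc
    · simp only [φ, dif_pos h]; exact (e ⟨vc, h⟩).2
    · simp only [φ, dif_neg h]; exact hm0
  have hφinj : ∀ v ∈ Tc, ∀ v' ∈ Tc, φ v = φ v' → v = v' := by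
    intro v h v' h' heq
    simp only [φ, dif_pos h, dif_pos h'] at heq
    have := e.injective (Subtype.ext heq)
    exact congrArg Subtype.val this
  let ψ : Fin (2 * N) → Sc := fun m => if h : ∃ v ∈ Tc, φ v = m then Classical.choose h else s0
  have hψ : ∀ v ∈ Tc, ψ (φ v) = v := by
    intro v hv
    have h : ∃ v' ∈ Tc, φ v' = φ v := ⟨v, hv, rfl⟩
    have hs := Classical.choose_spec h
    simp only [ψ, dif_pos h]
    exact hφinj _ hs.1 _ hv hs.2
  refine ⟨fun t => c (φ t.1, t.2), fun b => (ψ (dec b).1, (dec b).2), ?_, ?_⟩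
  · have hε0 : 0 ≤ 2 * ε := by
      refine le_trans ?_ (hgood m0 hm0).2
      exact Finset.sum_nonneg fun z _ => abs_nonneg _
    have key : ∀ vc, sc vc * ∑ v, s v * ∑ b, WY (c (φ vc, v)) b *
        (if (ψ (dec b).1, (dec b).2) = (vc, v) then (0:ℝ) else 1) ≤
        sc vc * (if vc ∈ Tc then 0 else 1) + sc vc * (2 * ε) := by
      intro vc
      rw [← mul_add]
      refine mul_le_mul_of_nonneg_left ?_ (hsc.1 vc)
      by_cases h : vc ∈ Tc
      · rw [if_pos h, zero_add]
        refine le_trans ?_ (hgood (φ vc) (hφG vc)).1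
        refine Finset.sum_le_sum fun v _ => mul_le_mul_of_nonneg_left ?_ (hs.1 v)
        refine Finset.sum_le_sum fun b _ => mul_le_mul_of_nonneg_left ?_ ((hWY _).1 b)
        by_cases hd : dec b = (φ vc, v)
        · have : (ψ (dec b).1, (dec b).2) = (vc, v) := by rw [hd]; simp [hψ vc h]
          rw [if_pos this, if_pos hd]
        · rw [if_neg hd]; split_ifs <;> norm_num
      · rw [if_neg h]
        refine le_trans (b := (1:ℝ)) ?_ (by linarith)
        refine le_of_le_of_eq (Finset.sum_le_sum fun v _ => mul_le_of_le_one_right (hs.1 v) ?_) hs.2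
        refine le_of_le_of_eq (Finset.sum_le_sum fun b _ => mul_le_of_le_one_right ((hWY _).1 b) ?_) (hWY (c (φ vc, v))).2
        split_ifs <;> norm_num
    refine (Finset.sum_le_sum fun vc _ => key vc).trans ?_
    rw [Finset.sum_add_distrib, ← Finset.sum_mul, hsc.2, one_mul]
  · intro vc
    let D : Sc → C → ℝ := fun vc z => ∑ v, s v * WZ (c (φ vc, v)) z
    change ∑ z, |D vc z - ∑ vc', sc vc' * D vc' z| ≤ 4 * ε
    have hD : ∀ vc, ∑ z, |D vc z - R z| ≤ 2 * ε := fun vc => (hgood (φ vc) (hφG vc)).2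
    have hz : ∀ z, |D vc z - ∑ vc', sc vc' * D vc' z| ≤ |D vc z - R z| + ∑ vc', sc vc' * |D vc' z - R z| := by
      intro z
      have h1 : D vc z - ∑ vc', sc vc' * D vc' z = (D vc z - R z) - ∑ vc', sc vc' * (D vc' z - R z) := by
        simp_rw [mul_sub, Finset.sum_sub_distrib, ← Finset.sum_mul, hsc.2]
        ring
      rw [h1]
      refine (abs_sub _ _).trans (add_le_add le_rfl ?_)
      refine (Finset.abs_sum_le_sum_abs _ _).trans (le_of_eq ?_)
      refine Finset.sum_congr rfl fun v _ => ?_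
      rw [abs_mul, abs_of_nonneg (hsc.1 v)]
    refine (Finset.sum_le_sum fun z _ => hz z).trans ?_
    rw [Finset.sum_add_distrib, Finset.sum_comm]
    simp_rw [← Finset.mul_sum]
    have h2 : ∑ v, sc v * ∑ z, |D v z - R z| ≤ ∑ v, sc v * (2 * ε) :=
      Finset.sum_le_sum fun v _ => mul_le_mul_of_nonneg_left (hD v) (hsc.1 v)
    rw [← Finset.sum_mul, hsc.2] at h2
    linarith [hD vc]

lemma lln {α : Type*} [Fintype α] {p : α → ℝ} (hp : IsPMF p) (g : α → ℝ) {δ : ℝ} (hδ : 0 < δ) :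
    Tendsto (fun n : ℕ => ∑ x : Fin n → α, iid p n x *
      (if |∑ i, g (x i) - n * ∑ a, p a * g a| < n * δ then 0 else 1)) atTop (nhds 0) := by
  set μ := ∑ a, p a * g a with hμ
  set V := ∑ a, p a * (g a - μ) ^ 2 with hV
  have hid : ∀ n (x : Fin n → α), 0 ≤ iid p n x := fun n x => Finset.prod_nonneg fun i _ => hp.1 _
  have hlim : Tendsto (fun n : ℕ => V / δ ^ 2 * (1 / (n:ℝ))) atTop (nhds 0) := by
    have := (tendsto_one_div_atTop_nhds_zero_nat (𝕜 := ℝ)).const_mul (V / δ ^ 2)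
    simpa using this
  refine tendsto_of_tendsto_of_tendsto_of_le_of_le' tendsto_const_nhds hlim ?_ ?_
  · refine Eventually.of_forall fun n => Finset.sum_nonneg fun x _ => mul_nonneg (hid n x) (by split_ifs <;> norm_num)
  · filter_upwards [eventually_gt_atTop 0] with n hn
    have hn' : (0:ℝ) < n := by exact_mod_cast hn
    have hv := var_sum (ι := Fin n) hp (fun _ a => g a - μ) (by
      intro i
      simp_rw [mul_sub, Finset.sum_sub_distrib, ← Finset.sum_mul, hp.2, hμ]
      ring)
    have hb : ∀ x : Fin n → α, iid p n x * (if |∑ i, g (x i) - n * μ| < n * δ then (0:ℝ) else 1) ≤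
        ((∏ l, p (x l)) * (∑ i, (g (x i) - μ)) ^ 2) * (1 / (n * δ) ^ 2) := by
      intro x
      have hx : ∑ i, (g (x i) - μ) = ∑ i, g (x i) - n * μ := by
        rw [Finset.sum_sub_distrib]; simp
      rw [hx, mul_assoc]
      refine mul_le_mul_of_nonneg_left ?_ (hid n x)
      split_ifs with h
      · positivity
      · push Not at h
        rw [mul_one_div, le_div_iff₀ (by positivity), one_mul, ← sq_abs (∑ i, g (x i) - n * μ)]
        exact pow_le_pow_left₀ (by positivity) h 2
    refine (Finset.sum_le_sum fun x _ => hb x).trans (le_of_eq ?_)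
    rw [← Finset.sum_mul, hv]
    simp only [Finset.sum_const, Finset.card_univ, Fintype.card_fin, nsmul_eq_mul, ← hV]
    field_simp

lemma Hsh_nonneg {α : Type*} [Fintype α] {p : α → ℝ} (hp : IsPMF p) : 0 ≤ Hsh p := by
  unfold Hsh
  rw [neg_nonneg]
  refine Finset.sum_nonpos fun a _ => mul_nonpos_of_nonneg_of_nonpos (hp.1 a) ?_
  refine Real.logb_nonpos (by norm_num) (hp.1 a) ?_
  rw [← hp.2]
  exact Finset.single_le_sum (fun b _ => hp.1 b) (Finset.mem_univ a)

lemma src {α : Type*} [Fintype α] {p : α → ℝ} (hp : IsPMF p) {δ : ℝ} (hδ : 0 < δ) :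
    ∃ T : (n : ℕ) → Finset (Fin n → α),
      (∀ n, ((T n).card : ℝ) ≤ (2:ℝ) ^ ((n:ℝ) * (Hsh p + δ))) ∧
      (∀ n, ∀ v ∈ T n, iid p n v ≤ (2:ℝ) ^ (-((n:ℝ) * (Hsh p - δ)))) ∧
      Tendsto (fun n : ℕ => ∑ x : Fin n → α, iid p n x * (if x ∈ T n then 0 else 1)) atTop (nhds 0) := by
  have hH : ∑ a, p a * (-Real.logb 2 (p a)) = Hsh p := by
    simp [Hsh]
  have hid : ∀ n (x : Fin n → α), 0 ≤ iid p n x := fun n x => Finset.prod_nonneg fun i _ => hp.1 _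
  have hpmf : ∀ n, IsPMF (iid p n) := fun n => pmf_pi (fun _ => hp)
  let T : (n : ℕ) → Finset (Fin n → α) := fun n => Finset.univ.filter fun x =>
    0 < iid p n x ∧ |∑ i, (-Real.logb 2 (p (x i))) - n * Hsh p| < n * δ
  have hT : ∀ n, ∀ v ∈ T n, iid p n v = (2:ℝ) ^ (-(∑ i, (-Real.logb 2 (p (v i))))) ∧
      |∑ i, (-Real.logb 2 (p (v i))) - n * Hsh p| < n * δ := by
    intro n v hv
    have hv := (Finset.mem_filter.1 hv).2
    refine ⟨?_, hv.2⟩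
    have hne : ∀ i, p (v i) ≠ 0 := by
      intro i h0
      have : iid p n v = 0 := Finset.prod_eq_zero (Finset.mem_univ i) h0
      linarith [hv.1]
    rw [← Real.rpow_logb (b := 2) (by norm_num) (by norm_num) hv.1]
    congr 1
    rw [Finset.sum_neg_distrib, neg_neg]
    unfold iid
    rw [Real.logb_prod (s := Finset.univ) (f := fun i => p (v i)) (fun i _ => hne i)]
  refine ⟨T, ?_, ?_, ?_⟩
  · intro n
    have h1 : ∀ v ∈ T n, (2:ℝ) ^ (-((n:ℝ) * (Hsh p + δ))) ≤ iid p n v := by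
      intro v hv
      obtain ⟨h1, h2⟩ := hT n v hv
      rw [h1]
      refine Real.rpow_le_rpow_of_exponent_le (by norm_num) ?_
      have := abs_lt.1 h2
      linarith [this.2]
    have h2 : ((T n).card : ℝ) * (2:ℝ) ^ (-((n:ℝ) * (Hsh p + δ))) ≤ 1 := by
      rw [← nsmul_eq_mul, ← Finset.sum_const, ← (hpmf n).2]
      exact (Finset.sum_le_sum h1).trans
        (Finset.sum_le_sum_of_subset_of_nonneg (Finset.subset_univ _) fun x _ _ => hid n x)
    rw [Real.rpow_neg (by norm_num), ← div_eq_mul_inv, div_le_one (by positivity)] at h2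
    exact h2
  · intro n v hv
    obtain ⟨h1, h2⟩ := hT n v hv
    rw [h1]
    refine Real.rpow_le_rpow_of_exponent_le (by norm_num) ?_
    have := abs_lt.1 h2
    linarith [this.1]
  · have hl := lln hp (fun a => -Real.logb 2 (p a)) hδ
    rw [hH] at hl
    refine hl.congr fun n => Finset.sum_congr rfl fun x _ => ?_
    by_cases h0 : iid p n x = 0
    · simp [h0]
    · have hpos : 0 < iid p n x := lt_of_le_of_ne (hid n x) (Ne.symm h0)
      congr 1
      simp [T, hpos]

lemma exists_kernel {Q X : Type*} [Fintype Q] [Fintype X] {pQX : Q × X → ℝ} (h : IsPMF pQX) :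
    ∃ (pQ : Q → ℝ) (K : Q → X → ℝ), IsPMF pQ ∧ (∀ q, IsPMF (K q)) ∧ ∀ q x, pQX (q, x) = pQ q * K q x := by
  have hpQ0 : ∀ q, 0 ≤ ∑ x, pQX (q, x) := fun q => Finset.sum_nonneg fun x _ => h.1 _
  refine ⟨fun q => ∑ x, pQX (q, x), fun q x => if ∑ x, pQX (q, x) = 0 then ∑ q', pQX (q', x) else
    pQX (q, x) / ∑ x, pQX (q, x), ⟨hpQ0, ?_⟩, ?_, ?_⟩
  · rw [← h.2, Fintype.sum_prod_type]
  · intro q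
    by_cases h0 : ∑ x, pQX (q, x) = 0
    · simp only [h0, if_true]
      refine ⟨fun x => Finset.sum_nonneg fun q _ => h.1 _, ?_⟩
      rw [Finset.sum_comm, ← h.2, Fintype.sum_prod_type]
    · simp only [h0, if_false]
      refine ⟨fun x => div_nonneg (h.1 _) (hpQ0 q), ?_⟩
      rw [← Finset.sum_div, div_self h0]
  · intro q x
    by_cases h0 : ∑ x, pQX (q, x) = 0
    · simp only [h0, zero_mul]
      exact (Finset.sum_eq_zero_iff_of_nonneg (fun x _ => h.1 (q, x))).1 h0 x (Finset.mem_univ _)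
    · simp only [h0, if_false]
      field_simp

lemma mean_info {Q X Y : Type*} [Fintype Q] [Fintype X] [Fintype Y]
    {pQ : Q → ℝ} {K : Q → X → ℝ} {W : X → Y → ℝ} (hQ : IsPMF pQ) (hK : ∀ q, IsPMF (K q))
    (hW : ∀ x, IsPMF (W x)) :
    ∑ t : Q × X × Y, (pQ t.1 * K t.1 t.2.1 * W t.2.1 t.2.2) *
      Real.logb 2 (W t.2.1 t.2.2 / ∑ x, K t.1 x * W x t.2.2)
    = condMI (fun t : Q × X × Y => pQ t.1 * K t.1 t.2.1 * W t.2.1 t.2.2) := by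
  set P : Q → Y → ℝ := fun q y => ∑ x, K q x * W x y with hP
  have e1 : ∀ q x, ∑ y, pQ q * K q x * W x y = pQ q * K q x := by
    intro q x; rw [← Finset.mul_sum, (hW x).2, mul_one]
  have e2 : ∀ q y, ∑ x, pQ q * K q x * W x y = pQ q * P q y := by
    intro q y; simp only [hP, Finset.mul_sum, mul_assoc]
  have e3 : ∀ q, ∑ x, ∑ y, pQ q * K q x * W x y = pQ q := by
    intro q; simp_rw [e1]; rw [← Finset.mul_sum, (hK q).2, mul_one]
  have e4 : ∀ q, ∑ x, pQ q * K q x = pQ q := by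
    intro q; rw [← Finset.mul_sum, (hK q).2, mul_one]
  have hPs : ∀ q, ∑ y, P q y = 1 := by
    intro q
    simp only [hP]
    rw [Finset.sum_comm]
    simp_rw [← Finset.mul_sum, (hW _).2, mul_one, (hK q).2]
  unfold condMI Hsh
  simp only [e1, e2, e4]
  -- write all terms as triple sums
  have t1 : ∑ a : Q × X, pQ a.1 * K a.1 a.2 * Real.logb 2 (pQ a.1 * K a.1 a.2) =
      ∑ q, ∑ x, ∑ y, pQ q * K q x * W x y * Real.logb 2 (pQ q * K q x) := by
    rw [Fintype.sum_prod_type]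
    refine Finset.sum_congr rfl fun q _ => Finset.sum_congr rfl fun x _ => ?_
    rw [← Finset.sum_mul, e1]
  have t2 : ∑ a : Q × Y, pQ a.1 * P a.1 a.2 * Real.logb 2 (pQ a.1 * P a.1 a.2) =
      ∑ q, ∑ x, ∑ y, pQ q * K q x * W x y * Real.logb 2 (pQ q * P q y) := by
    rw [Fintype.sum_prod_type]
    refine Finset.sum_congr rfl fun q _ => ?_
    rw [Finset.sum_comm]
    refine Finset.sum_congr rfl fun y _ => ?_
    rw [← Finset.sum_mul, e2]
  have t3 : ∑ q, pQ q * Real.logb 2 (pQ q) =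
      ∑ q, ∑ x, ∑ y, pQ q * K q x * W x y * Real.logb 2 (pQ q) := by
    refine Finset.sum_congr rfl fun q _ => ?_
    simp_rw [← Finset.sum_mul]
    rw [e3]
  rw [t1, t2, t3]
  simp only [Fintype.sum_prod_type]
  rw [← sub_eq_zero]
  simp only [sub_neg_eq_add, ← sub_eq_add_neg, ← Finset.sum_neg_distrib, ← Finset.sum_add_distrib, ← Finset.sum_sub_distrib]
  refine Finset.sum_eq_zero fun q _ => Finset.sum_eq_zero fun x _ => Finset.sum_eq_zero fun y _ => ?_
  by_cases h0 : pQ q * K q x * W x y = 0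
  · simp [h0]
  · have hW0 : W x y ≠ 0 := right_ne_zero_of_mul h0
    have hq0 : pQ q ≠ 0 := left_ne_zero_of_mul (left_ne_zero_of_mul h0)
    have hk0 : K q x ≠ 0 := right_ne_zero_of_mul (left_ne_zero_of_mul h0)
    have hP0 : P q y ≠ 0 := by
      have : K q x * W x y ≤ P q y := Finset.single_le_sum (f := fun x => K q x * W x y)
        (fun x _ => mul_nonneg ((hK q).1 x) ((hW x).1 y)) (Finset.mem_univ x)
      have h1 : 0 < K q x * W x y := lt_of_le_of_ne (mul_nonneg ((hK q).1 x) ((hW x).1 y))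
        (Ne.symm (mul_ne_zero hk0 hW0))
      exact ne_of_gt (lt_of_lt_of_le h1 this)
    rw [Real.logb_div hW0 hP0, Real.logb_mul (mul_ne_zero hq0 hk0) hW0, Real.logb_mul hq0 hk0,
      Real.logb_mul hq0 hP0]
    ring

lemma sum_triple {n : ℕ} {Q X Y : Type*} [Fintype Q] [Fintype X] [Fintype Y]
    (F : (Fin n → Q) → (Fin n → X) → (Fin n → Y) → ℝ) :
    ∑ q, ∑ a, ∑ b, F q a b = ∑ t : Fin n → Q × X × Y,
      F (fun i => (t i).1) (fun i => (t i).2.1) (fun i => (t i).2.2) := by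
  let e : (Fin n → Q × X × Y) ≃ (Fin n → Q) × (Fin n → X) × (Fin n → Y) :=
    { toFun := fun t => (fun i => (t i).1, fun i => (t i).2.1, fun i => (t i).2.2)
      invFun := fun u i => (u.1 i, u.2.1 i, u.2.2 i)
      left_inv := fun t => rfl
      right_inv := fun u => rfl }
  have := Fintype.sum_equiv e (fun t => F (fun i => (t i).1) (fun i => (t i).2.1) (fun i => (t i).2.2))
    (fun u => F u.1 u.2.1 u.2.2) (fun t => rfl)
  rw [this, Fintype.sum_prod_type]
  refine Finset.sum_congr rfl fun q _ => ?_
  rw [Fintype.sum_prod_type]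

lemma info_lim {Q X Y : Type*} [Fintype Q] [Fintype X] [Fintype Y]
    {pQ : Q → ℝ} {K : Q → X → ℝ} {W : X → Y → ℝ} (hQ : IsPMF pQ) (hK : ∀ q, IsPMF (K q))
    (hW : ∀ x, IsPMF (W x)) {I δ : ℝ} (hδ : 0 < δ)
    (hI : condMI (fun t : Q × X × Y => pQ t.1 * K t.1 t.2.1 * W t.2.1 t.2.2) = I) :
    Tendsto (fun n : ℕ => ∑ q : Fin n → Q, iid pQ n q * ∑ a : Fin n → X, (∏ i, K (q i) (a i)) *
      ∑ b : Fin n → Y, (∏ i, W (a i) (b i)) *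
      (if (2:ℝ) ^ ((n:ℝ) * (I - δ)) * (∑ a' : Fin n → X, (∏ i, K (q i) (a' i)) * ∏ i, W (a' i) (b i))
        < ∏ i, W (a i) (b i) then 0 else 1)) atTop (nhds 0) ∧
    Tendsto (fun n : ℕ => ∑ q : Fin n → Q, iid pQ n q * ∑ a : Fin n → X, (∏ i, K (q i) (a i)) *
      ∑ b : Fin n → Y, (∏ i, W (a i) (b i)) *
      (if ∏ i, W (a i) (b i) ≤ (2:ℝ) ^ ((n:ℝ) * (I + δ)) * (∑ a' : Fin n → X, (∏ i, K (q i) (a' i)) * ∏ i, W (a' i) (b i))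
        then 0 else 1)) atTop (nhds 0) := by
  set p : Q × X × Y → ℝ := fun t => pQ t.1 * K t.1 t.2.1 * W t.2.1 t.2.2 with hp
  set P : Q → Y → ℝ := fun q y => ∑ x, K q x * W x y with hP
  have hp0 : ∀ t, 0 ≤ p t := fun t => mul_nonneg (mul_nonneg (hQ.1 _) ((hK _).1 _)) ((hW _).1 _)
  have hpm : IsPMF p := by
    refine ⟨hp0, ?_⟩
    simp only [hp, Fintype.sum_prod_type]
    simp_rw [← Finset.mul_sum, (hW _).2, mul_one, ← Finset.mul_sum, (hK _).2, mul_one, hQ.2]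
  have hmean := (mean_info hQ hK hW).trans hI
  have hl := lln hpm (fun t => Real.logb 2 (W t.2.1 t.2.2 / P t.1 t.2.2)) hδ
  rw [hmean] at hl
  have hid : ∀ n (t : Fin n → Q × X × Y), 0 ≤ iid p n t := fun n x => Finset.prod_nonneg fun i _ => hp0 _
  have hPn : ∀ n (q : Fin n → Q) (b : Fin n → Y),
      (∑ a' : Fin n → X, (∏ i, K (q i) (a' i)) * ∏ i, W (a' i) (b i)) = ∏ i, P (q i) (b i) := by
    intro n q b
    simp only [hP, ← Finset.prod_mul_distrib]
    exact sum_pi_prod (fun i x => K (q i) x * W x (b i))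
  have key : ∀ n (t : Fin n → Q × X × Y), iid p n t ≠ 0 →
      |∑ i, Real.logb 2 (W (t i).2.1 (t i).2.2 / P (t i).1 (t i).2.2) - n * I| < n * δ →
      (2:ℝ) ^ ((n:ℝ) * (I - δ)) * (∏ i, P (t i).1 (t i).2.2) < ∏ i, W (t i).2.1 (t i).2.2 ∧
      ∏ i, W (t i).2.1 (t i).2.2 ≤ (2:ℝ) ^ ((n:ℝ) * (I + δ)) * (∏ i, P (t i).1 (t i).2.2) := by
    intro n t ht habs
    have hne : ∀ i, p (t i) ≠ 0 := by
      intro i h0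
      exact ht (Finset.prod_eq_zero (Finset.mem_univ i) h0)
    have hWp : ∀ i, 0 < W (t i).2.1 (t i).2.2 := fun i =>
      lt_of_le_of_ne ((hW _).1 _) (Ne.symm (right_ne_zero_of_mul (hne i)))
    have hKp : ∀ i, 0 < K (t i).1 (t i).2.1 := fun i =>
      lt_of_le_of_ne ((hK _).1 _) (Ne.symm (right_ne_zero_of_mul (left_ne_zero_of_mul (hne i))))
    have hPp : ∀ i, 0 < P (t i).1 (t i).2.2 := fun i =>
      lt_of_lt_of_le (mul_pos (hKp i) (hWp i)) (Finset.single_le_sum (f := fun x => K (t i).1 x * W x (t i).2.2)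
        (fun x _ => mul_nonneg ((hK _).1 x) ((hW x).1 _)) (Finset.mem_univ (t i).2.1))
    have hPP : 0 < ∏ i, P (t i).1 (t i).2.2 := Finset.prod_pos fun i _ => hPp i
    have hWW : 0 < ∏ i, W (t i).2.1 (t i).2.2 := Finset.prod_pos fun i _ => hWp i
    have hlog : (∏ i, W (t i).2.1 (t i).2.2) / (∏ i, P (t i).1 (t i).2.2) =
        (2:ℝ) ^ (∑ i, Real.logb 2 (W (t i).2.1 (t i).2.2 / P (t i).1 (t i).2.2)) := by
      rw [← Real.logb_prod (s := Finset.univ) (f := fun i => W (t i).2.1 (t i).2.2 / P (t i).1 (t i).2.2)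
        (fun i _ => (div_pos (hWp i) (hPp i)).ne'), Finset.prod_div_distrib,
        Real.rpow_logb (by norm_num) (by norm_num) (div_pos hWW hPP)]
    have hb := abs_lt.1 habs
    constructor
    · rw [← lt_div_iff₀ hPP, hlog]
      exact Real.rpow_lt_rpow_of_exponent_lt (by norm_num) (by linarith [hb.1])
    · rw [← div_le_iff₀ hPP, hlog]
      exact Real.rpow_le_rpow_of_exponent_le (by norm_num) (by linarith [hb.2])
  have hsum : ∀ n (B : (Fin n → Q) → (Fin n → X) → (Fin n → Y) → ℝ),
      ∑ q : Fin n → Q, iid pQ n q * ∑ a : Fin n → X, (∏ i, K (q i) (a i)) *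
        ∑ b : Fin n → Y, (∏ i, W (a i) (b i)) * B q a b =
      ∑ t : Fin n → Q × X × Y, iid p n t * B (fun i => (t i).1) (fun i => (t i).2.1) (fun i => (t i).2.2) := by
    intro n B
    simp_rw [Finset.mul_sum]
    rw [sum_triple]
    refine Finset.sum_congr rfl fun t _ => ?_
    simp only [iid, hp, Finset.prod_mul_distrib]
    ring
  constructor
  · refine tendsto_of_tendsto_of_tendsto_of_le_of_le tendsto_const_nhds hl ?_ ?_
    · intro n
      dsimp only
      rw [hsum n (fun q a b => if (2:ℝ) ^ ((n:ℝ) * (I - δ)) * (∑ a' : Fin n → X, (∏ i, K (q i) (a' i)) * ∏ i, W (a' i) (b i))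
        < ∏ i, W (a i) (b i) then 0 else 1)]
      exact Finset.sum_nonneg fun x _ => mul_nonneg (hid n x) (by split_ifs <;> norm_num)
    · intro n
      dsimp only
      rw [hsum n (fun q a b => if (2:ℝ) ^ ((n:ℝ) * (I - δ)) * (∑ a' : Fin n → X, (∏ i, K (q i) (a' i)) * ∏ i, W (a' i) (b i))
        < ∏ i, W (a i) (b i) then 0 else 1)]
      refine Finset.sum_le_sum fun t _ => ?_
      by_cases h0 : iid p n t = 0
      · simp [h0]
      · refine mul_le_mul_of_nonneg_left ?_ (hid n t)
        rw [hPn]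
        by_cases habs : |∑ i, Real.logb 2 (W (t i).2.1 (t i).2.2 / P (t i).1 (t i).2.2) - n * I| < n * δ
        · rw [if_pos (key n t h0 habs).1, if_pos habs]
        · rw [if_neg habs]; split_ifs <;> norm_num
  · refine tendsto_of_tendsto_of_tendsto_of_le_of_le tendsto_const_nhds hl ?_ ?_
    · intro n
      dsimp only
      rw [hsum n (fun q a b => if ∏ i, W (a i) (b i) ≤ (2:ℝ) ^ ((n:ℝ) * (I + δ)) * (∑ a' : Fin n → X, (∏ i, K (q i) (a' i)) * ∏ i, W (a' i) (b i))
        then 0 else 1)]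
      exact Finset.sum_nonneg fun x _ => mul_nonneg (hid n x) (by split_ifs <;> norm_num)
    · intro n
      dsimp only
      rw [hsum n (fun q a b => if ∏ i, W (a i) (b i) ≤ (2:ℝ) ^ ((n:ℝ) * (I + δ)) * (∑ a' : Fin n → X, (∏ i, K (q i) (a' i)) * ∏ i, W (a' i) (b i))
        then 0 else 1)]
      refine Finset.sum_le_sum fun t _ => ?_
      by_cases h0 : iid p n t = 0
      · simp [h0]
      · refine mul_le_mul_of_nonneg_left ?_ (hid n t)
        rw [hPn]
        by_cases habs : |∑ i, Real.logb 2 (W (t i).2.1 (t i).2.2 / P (t i).1 (t i).2.2) - n * I| < n * δ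
        · rw [if_pos (key n t h0 habs).2, if_pos habs]
        · rw [if_neg habs]; split_ifs <;> norm_num

/-- achievability part of the source–channel coding theorem for the
wiretap channel with vanishing-rate seed. -/
theorem statement0
    {Vc Vp X Y Z : Type*} [Fintype Vc] [Fintype Vp] [Fintype X] [Fintype Y] [Fintype Z]
    (pVc : Vc → ℝ) (pVp : Vp → ℝ) (W : X → Y × Z → ℝ)
    (hVc : IsPMF pVc) (hVp : IsPMF pVp) (hW : ∀ x, IsPMF (W x))
    (hex : ∃ (k : ℕ) (pQX : Fin k × X → ℝ), IsPMF pQX ∧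
      Hsh pVc + Hsh pVp <
        condMI (fun t : Fin k × X × Y => pQX (t.1, t.2.1) * ∑ z, W t.2.1 (t.2.2, z)) ∧
      Hsh pVc <
        condMI (fun t : Fin k × X × Y => pQX (t.1, t.2.1) * ∑ z, W t.2.1 (t.2.2, z))
          - condMI (fun t : Fin k × X × Z => pQX (t.1, t.2.1) * ∑ y, W t.2.1 (y, t.2.2)) ∧
      Hsh pVp >
        condMI (fun t : Fin k × X × Z => pQX (t.1, t.2.1) * ∑ y, W t.2.1 (y, t.2.2))) :
    ∃ (d : ℕ → ℕ)
      (f : (n : ℕ) → (Fin n → Vc) × (Fin n → Vp) × Fin (2 ^ d n) → (Fin n → X))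
      (g : (n : ℕ) → (Fin n → Y) → (Fin n → Vc) × (Fin n → Vp)),
      -- vanishing seed rate
      Tendsto (fun n => (d n : ℝ) / n) atTop (nhds 0) ∧
      -- average probability of error `P_e(C_n) → 0`
      Tendsto (fun n =>
          ∑ vc : Fin n → Vc, ∑ vp : Fin n → Vp, ∑ u : Fin (2 ^ d n),
            ∑ y : Fin n → Y, ∑ z : Fin n → Z,
              iid pVc n vc * iid pVp n vp * (1 / (2:ℝ) ^ d n) *
                (∏ i, W (f n (vc, vp, u) i) (y i, z i)) *
                (if g n y = (vc, vp) then 0 else 1))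
        atTop (nhds 0) ∧
      -- secrecy metric `S(C_n) = max_{v_c^n} V(p_{Z^n|V_c^n = v_c^n}, p_{Z^n}) → 0`
      Tendsto (fun n =>
          ⨆ vc : Fin n → Vc,
            VD (fun z : Fin n → Z =>
                  ∑ vp : Fin n → Vp, ∑ u : Fin (2 ^ d n),
                    iid pVp n vp * (1 / (2:ℝ) ^ d n) *
                      ∑ y : Fin n → Y, ∏ i, W (f n (vc, vp, u) i) (y i, z i))
               (fun z : Fin n → Z =>
                  ∑ vc' : Fin n → Vc, ∑ vp : Fin n → Vp, ∑ u : Fin (2 ^ d n),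
                    iid pVc n vc' * iid pVp n vp * (1 / (2:ℝ) ^ d n) *
                      ∑ y : Fin n → Y, ∏ i, W (f n (vc', vp, u) i) (y i, z i)))
        atTop (nhds 0) := by
  obtain ⟨k, pQX, hpQX, h1, -, h3⟩ := hex
  obtain ⟨pQ, K, hQ, hK, hfac⟩ := exists_kernel hpQX
  set WY : X → Y → ℝ := fun x y => ∑ z, W x (y, z) with hWYd
  set WZ : X → Z → ℝ := fun x z => ∑ y, W x (y, z) with hWZd
  have hWY : ∀ x, IsPMF (WY x) := fun x =>
    ⟨fun y => Finset.sum_nonneg fun z _ => (hW x).1 _, by rw [← (hW x).2, Fintype.sum_prod_type]⟩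
  have hWZ : ∀ x, IsPMF (WZ x) := fun x =>
    ⟨fun z => Finset.sum_nonneg fun y _ => (hW x).1 _, by rw [← (hW x).2, Fintype.sum_prod_type_right]⟩
  set IY := condMI (fun t : Fin k × X × Y => pQX (t.1, t.2.1) * ∑ z, W t.2.1 (t.2.2, z)) with hIY
  set IZ := condMI (fun t : Fin k × X × Z => pQX (t.1, t.2.1) * ∑ y, W t.2.1 (y, t.2.2)) with hIZ
  have hIY' : condMI (fun t : Fin k × X × Y => pQ t.1 * K t.1 t.2.1 * WY t.2.1 t.2.2) = IY := by
    simp only [hIY, hfac, hWYd]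
  have hIZ' : condMI (fun t : Fin k × X × Z => pQ t.1 * K t.1 t.2.1 * WZ t.2.1 t.2.2) = IZ := by
    simp only [hIZ, hfac, hWZd]
  have hHc := Hsh_nonneg hVc
  obtain ⟨δ, hδ, hδ1, hδ2⟩ : ∃ δ : ℝ, 0 < δ ∧ 5 * δ ≤ IY - (Hsh pVc + Hsh pVp) ∧ 5 * δ ≤ Hsh pVp - IZ := by
    refine ⟨min (IY - (Hsh pVc + Hsh pVp)) (Hsh pVp - IZ) / 5, ?_, ?_, ?_⟩
    · have : 0 < min (IY - (Hsh pVc + Hsh pVp)) (Hsh pVp - IZ) := lt_min (by linarith) (by linarith)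
      linarith
    · linarith [min_le_left (IY - (Hsh pVc + Hsh pVp)) (Hsh pVp - IZ)]
    · linarith [min_le_right (IY - (Hsh pVc + Hsh pVp)) (Hsh pVp - IZ)]
  obtain ⟨Tc, hTc1, -, hTc3⟩ := src hVc hδ
  obtain ⟨Tp, hTp1, hTp2, hTp3⟩ := src hVp hδ
  obtain ⟨hα, -⟩ := info_lim hQ hK hWY hδ hIY'
  obtain ⟨-, hβ⟩ := info_lim hQ hK hWZ hδ hIZ'
  set r : ℝ := (2:ℝ) ^ (-δ) with hr
  have hr0 : 0 < r := by positivity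
  have hr1 : r < 1 := Real.rpow_lt_one_of_one_lt_of_neg (by norm_num) (by linarith)
  have hrn : Tendsto (fun n : ℕ => r ^ n) atTop (nhds 0) := tendsto_pow_atTop_nhds_zero_of_lt_one hr0.le hr1
  have hrn' : ∀ n : ℕ, r ^ n = (2:ℝ) ^ (-((n:ℝ) * δ)) := by
    intro n
    rw [hr, ← Real.rpow_natCast, ← Real.rpow_mul (by norm_num)]
    congr 1; ring
  set τ : ℕ → ℝ := fun n => ∑ x : Fin n → Vp, iid pVp n x * (if x ∈ Tp n then 0 else 1) with hτ
  set τc : ℕ → ℝ := fun n => ∑ x : Fin n → Vc, iid pVc n x * (if x ∈ Tc n then 0 else 1) with hτc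
  set α : ℕ → ℝ := fun n : ℕ => ∑ q : Fin n → Fin k, iid pQ n q * ∑ a : Fin n → X, (∏ i, K (q i) (a i)) *
      ∑ b : Fin n → Y, (∏ i, WY (a i) (b i)) *
      (if (2:ℝ) ^ ((n:ℝ) * (IY - δ)) * (∑ a' : Fin n → X, (∏ i, K (q i) (a' i)) * ∏ i, WY (a' i) (b i))
        < ∏ i, WY (a i) (b i) then 0 else 1) with hαd
  set β : ℕ → ℝ := fun n : ℕ => ∑ q : Fin n → Fin k, iid pQ n q * ∑ a : Fin n → X, (∏ i, K (q i) (a i)) *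
      ∑ b : Fin n → Z, (∏ i, WZ (a i) (b i)) *
      (if ∏ i, WZ (a i) (b i) ≤ (2:ℝ) ^ ((n:ℝ) * (IZ + δ)) * (∑ a' : Fin n → X, (∏ i, K (q i) (a' i)) * ∏ i, WZ (a' i) (b i))
        then 0 else 1) with hβd
  set ε : ℕ → ℝ := fun n => 3 * τ n + α n + 2 * β n + 4 * r ^ n + √(r ^ n) with hεd
  have hε : Tendsto ε atTop (nhds 0) := by
    have hsq : Tendsto (fun n : ℕ => √(r ^ n)) atTop (nhds 0) := by
      have := (Real.continuous_sqrt.tendsto 0).comp hrn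
      simpa [Function.comp_def] using this
    have := ((((hTp3.const_mul 3).add hα).add (hβ.const_mul 2)).add (hrn.const_mul 4)).add hsq
    simpa using this
  have hcode : ∀ n : ℕ, ∃ (f : (Fin n → Vc) × (Fin n → Vp) → (Fin n → X))
      (g : (Fin n → Y) → (Fin n → Vc) × (Fin n → Vp)),
      (∑ vc, iid pVc n vc * ∑ v, iid pVp n v * ∑ b : Fin n → Y, (∏ i, WY (f (vc, v) i) (b i)) *
        (if g b = (vc, v) then 0 else 1)) ≤ τc n + 2 * ε n ∧
      ∀ vc, (∑ z : Fin n → Z, |∑ v, iid pVp n v * (∏ i, WZ (f (vc, v) i) (z i)) -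
        ∑ vc', iid pVc n vc' * ∑ v, iid pVp n v * (∏ i, WZ (f (vc', v) i) (z i))|) ≤ 4 * ε n := by
    intro n
    have g1 : IsPMF (iid pQ n) := pmf_pi (K := fun _ : Fin n => pQ) fun _ => hQ
    have g2 : IsPMF (iid pVc n) := pmf_pi (K := fun _ : Fin n => pVc) fun _ => hVc
    have g3 : IsPMF (iid pVp n) := pmf_pi (K := fun _ : Fin n => pVp) fun _ => hVp
    have g4 : ∀ q : Fin n → Fin k, IsPMF (fun a : Fin n → X => ∏ i, K (q i) (a i)) :=
      fun q => pmf_pi (K := fun i => K (q i)) fun i => hK (q i)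
    have g5 : ∀ a : Fin n → X, IsPMF (fun b : Fin n → Y => ∏ i, WY (a i) (b i)) :=
      fun a => pmf_pi (K := fun i => WY (a i)) fun i => hWY (a i)
    have g6 : ∀ a : Fin n → X, IsPMF (fun b : Fin n → Z => ∏ i, WZ (a i) (b i)) :=
      fun a => pmf_pi (K := fun i => WZ (a i)) fun i => hWZ (a i)
    have hcs := code_shot (ρ := iid pQ n) (K := fun (q : Fin n → Fin k) (a : Fin n → X) => ∏ i, K (q i) (a i))
      (WY := fun (a : Fin n → X) (b : Fin n → Y) => ∏ i, WY (a i) (b i))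
      (WZ := fun (a : Fin n → X) (b : Fin n → Z) => ∏ i, WZ (a i) (b i))
      ((Tc n).card + 1) (by omega) g1 g4 g3 g2 g5 g6
      (Tc n) (by omega) (Tp n)
      (σ := (2:ℝ) ^ (-((n:ℝ) * (Hsh pVp - δ)))) (G := (2:ℝ) ^ ((n:ℝ) * (IY - δ)))
      (G' := (2:ℝ) ^ ((n:ℝ) * (IZ + δ))) (by positivity) (by positivity) (by positivity)
      (hTp2 n) (ε n)
    have hn0 : (0:ℝ) ≤ n := Nat.cast_nonneg n
    have b1 : (2 * (((Tc n).card + 1 : ℕ) : ℝ) * (Tp n).card) * ((2:ℝ) ^ ((n:ℝ) * (IY - δ)))⁻¹ ≤ 4 * r ^ n := by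
      have c1 : (((Tc n).card + 1 : ℕ) : ℝ) ≤ 2 * (2:ℝ) ^ ((n:ℝ) * (Hsh pVc + δ)) := by
        push_cast
        have : (1:ℝ) ≤ (2:ℝ) ^ ((n:ℝ) * (Hsh pVc + δ)) :=
          Real.one_le_rpow (by norm_num) (by positivity)
        linarith [hTc1 n]
      have c2 : (2 * (((Tc n).card + 1 : ℕ) : ℝ) * (Tp n).card) * ((2:ℝ) ^ ((n:ℝ) * (IY - δ)))⁻¹ ≤
          (2 * (2 * (2:ℝ) ^ ((n:ℝ) * (Hsh pVc + δ))) * (2:ℝ) ^ ((n:ℝ) * (Hsh pVp + δ))) * ((2:ℝ) ^ ((n:ℝ) * (IY - δ)))⁻¹ := by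
        have := hTp1 n
        gcongr
      refine c2.trans ?_
      rw [hrn', ← Real.rpow_neg (by norm_num)]
      have : (2 * (2 * (2:ℝ) ^ ((n:ℝ) * (Hsh pVc + δ))) * (2:ℝ) ^ ((n:ℝ) * (Hsh pVp + δ))) * (2:ℝ) ^ (-((n:ℝ) * (IY - δ)))
         = 4 * (2:ℝ) ^ (((n:ℝ) * (Hsh pVc + δ)) + ((n:ℝ) * (Hsh pVp + δ)) + (-((n:ℝ) * (IY - δ)))) := by
        rw [Real.rpow_add (by norm_num), Real.rpow_add (by norm_num)]; ring
      rw [this]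
      refine mul_le_mul_of_nonneg_left (Real.rpow_le_rpow_of_exponent_le (by norm_num) ?_) (by norm_num)
      nlinarith
    have b2 : √((2:ℝ) ^ (-((n:ℝ) * (Hsh pVp - δ))) * (2:ℝ) ^ ((n:ℝ) * (IZ + δ))) ≤ √(r ^ n) := by
      refine Real.sqrt_le_sqrt ?_
      rw [hrn', ← Real.rpow_add (by norm_num)]
      refine Real.rpow_le_rpow_of_exponent_le (by norm_num) ?_
      nlinarith
    have hfin := add_le_add (add_le_add (le_refl (3 * τ n + α n + 2 * β n)) b1) b2
    obtain ⟨f, g, k1, k2⟩ := hcs (by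
      refine le_trans (le_of_eq ?_) hfin
      simp only [hτ, hαd, hβd]
      congr!)
    refine ⟨f, g, ?_, k2⟩
    refine le_trans (le_of_eq ?_) (k1.trans (le_of_eq ?_))
    · congr!
    · simp only [hτc]
      congr!
  choose f g hf1 hf2 using hcode
  have hYm : ∀ n (x : Fin n → X) (y : Fin n → Y), ∑ z : Fin n → Z, ∏ i, W (x i) (y i, z i) = ∏ i, WY (x i) (y i) := by
    intro n x y
    exact sum_pi_prod (fun i z => W (x i) (y i, z))
  have hZm : ∀ n (x : Fin n → X) (z : Fin n → Z), ∑ y : Fin n → Y, ∏ i, W (x i) (y i, z i) = ∏ i, WZ (x i) (z i) := by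
    intro n x z
    exact sum_pi_prod (fun i y => W (x i) (y, z i))
  have hic0 : ∀ n x, 0 ≤ iid pVc n x := fun n x => Finset.prod_nonneg fun i _ => hVc.1 _
  have hip0 : ∀ n x, 0 ≤ iid pVp n x := fun n x => Finset.prod_nonneg fun i _ => hVp.1 _
  refine ⟨fun _ => 0, fun n t => f n (t.1, t.2.1), g, ?_, ?_, ?_⟩
  · simp
  · have hlim : Tendsto (fun n => τc n + 2 * ε n) atTop (nhds 0) := by
      have := hTc3.add (hε.const_mul 2)
      simpa using this
    have heq : ∀ n, (∑ vc : Fin n → Vc, ∑ vp : Fin n → Vp, ∑ u : Fin (2 ^ 0),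
            ∑ y : Fin n → Y, ∑ z : Fin n → Z,
              iid pVc n vc * iid pVp n vp * (1 / (2:ℝ) ^ 0) *
                (∏ i, W (f n (vc, vp) i) (y i, z i)) *
                (if g n y = (vc, vp) then (0:ℝ) else 1)) =
        (∑ vc, iid pVc n vc * ∑ v, iid pVp n v * ∑ b : Fin n → Y, (∏ i, WY (f n (vc, v) i) (b i)) *
        (if g n b = (vc, v) then 0 else 1)) := by
      intro n
      refine Finset.sum_congr rfl fun vc _ => ?_
      rw [Finset.mul_sum]
      refine Finset.sum_congr rfl fun vp _ => ?_
      rw [Finset.sum_const, Finset.card_univ, Fintype.card_fin, pow_zero, one_smul, Finset.mul_sum, Finset.mul_sum]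
      refine Finset.sum_congr rfl fun y _ => ?_
      rw [← hYm, Finset.sum_mul, Finset.mul_sum, Finset.mul_sum]
      refine Finset.sum_congr rfl fun z _ => ?_
      ring
    refine tendsto_of_tendsto_of_tendsto_of_le_of_le tendsto_const_nhds hlim ?_ ?_
    · intro n
      dsimp only
      rw [heq n]
      refine Finset.sum_nonneg fun vc _ => mul_nonneg (hic0 n vc) (Finset.sum_nonneg fun v _ =>
        mul_nonneg (hip0 n v) (Finset.sum_nonneg fun b _ => mul_nonneg
          (Finset.prod_nonneg fun i _ => (hWY _).1 _) (by split_ifs <;> norm_num)))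
    · intro n
      dsimp only
      rw [heq n]
      exact hf1 n
  · have hlim : Tendsto (fun n => 4 * ε n) atTop (nhds 0) := by
      have := hε.const_mul 4
      simpa using this
    have hVcne : Nonempty Vc := by
      by_contra h
      rw [not_nonempty_iff] at h
      have := hVc.2
      simp at this
    have e1 : ∀ n (vc : Fin n → Vc) (z : Fin n → Z), (∑ vp : Fin n → Vp, ∑ u : Fin (2 ^ 0),
                    iid pVp n vp * (1 / (2:ℝ) ^ 0) *
                      ∑ y : Fin n → Y, ∏ i, W (f n (vc, vp) i) (y i, z i)) =
        ∑ v, iid pVp n v * (∏ i, WZ (f n (vc, v) i) (z i)) := by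
      intro n vc z
      refine Finset.sum_congr rfl fun vp _ => ?_
      rw [Finset.sum_const, Finset.card_univ, Fintype.card_fin, pow_zero, one_smul, hZm]
      simp
    have e2 : ∀ n (z : Fin n → Z), (∑ vc' : Fin n → Vc, ∑ vp : Fin n → Vp, ∑ u : Fin (2 ^ 0),
                    iid pVc n vc' * iid pVp n vp * (1 / (2:ℝ) ^ 0) *
                      ∑ y : Fin n → Y, ∏ i, W (f n (vc', vp) i) (y i, z i)) =
        ∑ vc', iid pVc n vc' * ∑ v, iid pVp n v * (∏ i, WZ (f n (vc', v) i) (z i)) := by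
      intro n z
      refine Finset.sum_congr rfl fun vc _ => ?_
      rw [Finset.mul_sum]
      refine Finset.sum_congr rfl fun vp _ => ?_
      rw [Finset.sum_const, Finset.card_univ, Fintype.card_fin, pow_zero, one_smul, hZm]
      simp [mul_assoc]
    refine tendsto_of_tendsto_of_tendsto_of_le_of_le tendsto_const_nhds hlim ?_ ?_
    · intro n
      exact Real.iSup_nonneg fun vc => Finset.sum_nonneg fun z _ => abs_nonneg _
    · intro n
      refine ciSup_le fun vc => ?_
      refine le_trans (le_of_eq ?_) (hf2 n vc)
      unfold VD
      refine Finset.sum_congr rfl fun z _ => ?_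
      rw [← e1, ← e2]
end
end

section
/- Let (X, p_X) be a DMS on a finite alphabet. If a rate R is achievable with uniform compression codes, i.e., there exists a sequence of (2^{nR}, n, 2^{d_n}) uniform compression codes with lim sup (1/n) log M_n ≤ R, d_n/n → 0, P_e(φ_n, ψ_n) → 0, and U_e(φ_n) → 0, then R ≥ H(X). -/
open Finset Filter Real

attribute [local instance] Classical.propDecidable

noncomputable section

/-- Gibbs inequality with a subprobability reference. -/
lemma gibbs_aux {α : Type*} [Fintype α] (p q : α → ℝ) (hp : IsPMF p) (hq : ∀ a, 0 < q a)
    (hs : ∑ a, q a ≤ 1) : ∑ a, Real.negMulLog (p a) ≤ ∑ a, p a * (- Real.log (q a)) := by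
  have key : ∀ a, Real.negMulLog (p a) ≤ p a * (- Real.log (q a)) + (q a - p a) := by
    intro a
    rcases (hp.1 a).eq_or_lt with h | h
    · rw [← h]; simp [(hq a).le]
    · have h1 := Real.log_le_sub_one_of_pos (div_pos (hq a) h)
      rw [Real.log_div (hq a).ne' h.ne'] at h1
      have h2 := mul_le_mul_of_nonneg_left h1 h.le
      have h3 : p a * (q a / p a - 1) = q a - p a := by field_simp
      rw [Real.negMulLog]
      linarith
  calc _ ≤ ∑ a, (p a * (- Real.log (q a)) + (q a - p a)) := Finset.sum_le_sum fun a _ => key a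
    _ = ∑ a, p a * (- Real.log (q a)) + (∑ a, q a - ∑ a, p a) := by
        rw [Finset.sum_add_distrib, Finset.sum_sub_distrib]
    _ ≤ _ := by rw [hp.2]; linarith

lemma iid_cons {α : Type*} [Fintype α] (p : α → ℝ) (n : ℕ) (a : α) (x : Fin n → α) :
    iid p (n + 1) (Fin.cons a x : Fin (n + 1) → α) = p a * iid p n x := by
  simp [iid, Fin.prod_univ_succ]

lemma sum_fin_cons {α : Type*} [Fintype α] (n : ℕ) (f : (Fin (n + 1) → α) → ℝ) :
    ∑ x, f x = ∑ a : α, ∑ x : Fin n → α, f (Fin.cons a x : Fin (n + 1) → α) := by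
  rw [← (Fin.consEquiv (fun _ : Fin (n + 1) => α)).sum_comp, Fintype.sum_prod_type]
  rfl

lemma iid_pmf {α : Type*} [Fintype α] (p : α → ℝ) (hp : IsPMF p) (n : ℕ) :
    IsPMF (iid p n) := by
  refine ⟨fun x => Finset.prod_nonneg fun i _ => hp.1 _, ?_⟩
  induction n with
  | zero => simp [iid]
  | succ n ih =>
    rw [sum_fin_cons]
    simp only [iid_cons, ← Finset.mul_sum, ih, mul_one, hp.2]

lemma iid_ent {α : Type*} [Fintype α] (p : α → ℝ) (hp : IsPMF p) (n : ℕ) :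
    ∑ x, Real.negMulLog (iid p n x) = n * ∑ a, Real.negMulLog (p a) := by
  induction n with
  | zero => simp [iid]
  | succ n ih =>
    rw [sum_fin_cons]
    simp only [iid_cons, Real.negMulLog_mul, Finset.sum_add_distrib, ← Finset.mul_sum,
      ← Finset.sum_mul, ih, (iid_pmf p hp n).2, hp.2]
    push_cast
    ring

lemma Hsh_eq {α : Type*} [Fintype α] (p : α → ℝ) :
    Hsh p = (∑ a, Real.negMulLog (p a)) / Real.log 2 := by
  rw [Hsh, Finset.sum_div, ← Finset.sum_neg_distrib]
  refine Finset.sum_congr rfl fun a _ => ?_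
  rw [Real.logb, Real.negMulLog]; ring

/-- Bound for a fixed seed. -/
lemma seed_bound {A : Type*} [Fintype A] [Nonempty A] (P : A → ℝ) (hP : IsPMF P) (M : ℕ)
    (f : A → Fin M) (g : Fin M → A) :
    ∑ a, Real.negMulLog (P a) ≤ Real.log 2 + Real.log M +
      (∑ a, P a * (if g (f a) = a then 0 else 1)) * Real.log (Fintype.card A) := by
  have hM : 0 < M := (f (Classical.arbitrary A)).pos
  have hM' : (0:ℝ) < M := by exact_mod_cast hM
  have hM1 : (1:ℝ) ≤ M := by exact_mod_cast hM
  have hN : (0:ℝ) < Fintype.card A := by exact_mod_cast Fintype.card_pos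
  have hN1 : (1:ℝ) ≤ Fintype.card A := by exact_mod_cast (Fintype.card_pos : 0 < Fintype.card A)
  let q : A → ℝ := fun a => (1/2) * ((if g (f a) = a then 1 else 0) * (1 / (M:ℝ)))
    + (1/2) * (1 / (Fintype.card A : ℝ))
  have hq : ∀ a, 0 < q a := by
    intro a
    have : (0:ℝ) ≤ if g (f a) = a then 1 else 0 := by split_ifs <;> norm_num
    simp only [q]
    positivity
  have hcard : ∑ a, (if g (f a) = a then (1:ℝ) else 0) ≤ M := by
    rw [Finset.sum_boole]
    have : (Finset.univ.filter fun a => g (f a) = a).card ≤ (Finset.univ : Finset (Fin M)).card := by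
      apply Finset.card_le_card_of_injOn f (fun _ _ => Finset.mem_coe.2 (Finset.mem_univ _))
      intro a ha b hb hab
      simp only [Finset.coe_filter, Finset.mem_univ, true_and, Set.mem_ofPred_eq] at ha hb
      rw [← ha, ← hb, hab]
    rw [Finset.card_univ, Fintype.card_fin] at this
    exact_mod_cast this
  have hs : ∑ a, q a ≤ 1 := by
    simp only [q, Finset.sum_add_distrib, ← Finset.mul_sum, ← Finset.sum_mul]
    have h1 : (∑ a, (if g (f a) = a then (1:ℝ) else 0)) * (1 / (M:ℝ)) ≤ 1 := by
      rw [mul_one_div, div_le_one hM']; exact hcard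
    have h2 : ∑ _a : A, (1 / (Fintype.card A : ℝ)) = 1 := by
      rw [Finset.sum_const, Finset.card_univ, nsmul_eq_mul]; field_simp
    rw [h2]
    linarith
  refine (gibbs_aux P q hP hq hs).trans ?_
  have key : ∀ a, - Real.log (q a) ≤ Real.log 2 + Real.log M +
      (if g (f a) = a then 0 else 1) * Real.log (Fintype.card A) := by
    intro a
    have hl := Real.log_nonneg hM1
    by_cases h : g (f a) = a
    · have : 1 / (2 * (M:ℝ)) ≤ q a := by
        simp only [q, h, if_true]
        have : 0 < (1/2) * (1 / (Fintype.card A : ℝ)) := by positivity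
        have h3 : 1 / (2 * (M:ℝ)) = (1/2) * (1 * (1 / (M:ℝ))) := by field_simp
        linarith
      have := Real.log_le_log (by positivity) this
      rw [one_div, Real.log_inv, Real.log_mul (by norm_num) hM'.ne'] at this
      simp only [h, if_true]
      linarith
    · have : 1 / (2 * (Fintype.card A:ℝ)) ≤ q a := by
        simp only [q, h, if_false]
        apply le_of_eq
        field_simp
        ring
      have := Real.log_le_log (by positivity) this
      rw [one_div, Real.log_inv, Real.log_mul (by norm_num) hN.ne'] at this
      simp only [h, if_false]
      linarith
  calc _ ≤ ∑ a, P a * (Real.log 2 + Real.log M +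
      (if g (f a) = a then 0 else 1) * Real.log (Fintype.card A)) :=
        Finset.sum_le_sum fun a _ => mul_le_mul_of_nonneg_left (key a) (hP.1 a)
    _ = _ := by
      simp only [mul_add, Finset.sum_add_distrib, ← Finset.sum_mul, hP.2, ← mul_assoc, one_mul]

/-- Averaging over the seed. -/
lemma avg_bound {A : Type*} [Fintype A] [Nonempty A] (P : A → ℝ) (hP : IsPMF P) (M d : ℕ)
    (f : A × Fin (2 ^ d) → Fin M) (g : Fin M × Fin (2 ^ d) → A) :
    ∑ a, Real.negMulLog (P a) ≤ Real.log 2 + Real.log M +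
      (∑ a, ∑ u : Fin (2 ^ d), P a * (1 / (2:ℝ) ^ d) * (if g (f (a, u), u) = a then 0 else 1))
        * Real.log (Fintype.card A) := by
  have h := fun u : Fin (2 ^ d) => seed_bound P hP M (fun a => f (a, u)) (fun m => g (m, u))
  have h2 := Finset.sum_le_sum fun (u : Fin (2 ^ d)) (_ : u ∈ Finset.univ) => h u
  rw [Finset.sum_add_distrib, Finset.sum_const, Finset.sum_const, ← Finset.sum_mul,
    Finset.card_univ, Fintype.card_fin, nsmul_eq_mul, nsmul_eq_mul] at h2
  push_cast at h2
  have hpos : (0:ℝ) < 2 ^ d := by positivity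
  have h3 : (∑ a, ∑ u : Fin (2 ^ d),
      P a * (1 / (2:ℝ) ^ d) * (if g (f (a, u), u) = a then 0 else 1))
      = (1 / (2:ℝ) ^ d) * ∑ u : Fin (2 ^ d), ∑ a, P a * (if g (f (a, u), u) = a then 0 else 1) := by
    rw [Finset.sum_comm, Finset.mul_sum]
    refine Finset.sum_congr rfl fun u _ => ?_
    rw [Finset.mul_sum]
    refine Finset.sum_congr rfl fun a _ => ?_
    ring
  rw [h3]
  have h4 := mul_le_mul_of_nonneg_left h2 (le_of_lt (one_div_pos.2 hpos))
  rw [mul_add, ← mul_assoc, ← mul_assoc, ← mul_assoc, one_div_mul_cancel hpos.ne', one_mul,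
    one_mul] at h4
  exact h4

/-- Near uniformity bounds the size of the message set. -/
lemma unif_bound {B : Type*} [Fintype B] (M : ℕ) (hM : 0 < M) (f : B → Fin M) (p : Fin M → ℝ)
    (hp : ∀ m, (∀ b, f b ≠ m) → p m = 0) (h : VD p (fun _ => 1 / (M : ℝ)) < 1 / 2) :
    (M : ℝ) ≤ 2 * Fintype.card B := by
  have hM' : (0:ℝ) < M := by exact_mod_cast hM
  let S : Finset (Fin M) := Finset.univ.image f
  have hS : S.card ≤ Fintype.card B := Finset.card_image_le
  have hS' : (S.card : ℝ) ≤ Fintype.card B := by exact_mod_cast hS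
  have h1 : ∑ m ∈ Sᶜ, (1 / (M:ℝ)) ≤ VD p (fun _ => 1 / (M : ℝ)) := by
    calc _ = ∑ m ∈ Sᶜ, |p m - 1 / (M:ℝ)| := by
          refine Finset.sum_congr rfl fun m hm => ?_
          rw [hp m (fun b hb => Finset.mem_compl.1 hm
            (Finset.mem_image.2 ⟨b, Finset.mem_univ _, hb⟩)), zero_sub, abs_neg,
            abs_of_pos (by positivity)]
      _ ≤ _ := Finset.sum_le_sum_of_subset_of_nonneg (Finset.subset_univ _)
          fun _ _ _ => abs_nonneg _
  rw [Finset.sum_const, nsmul_eq_mul] at h1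
  have hc : (S.card : ℝ) + (Sᶜ.card : ℝ) = M := by
    have := Finset.card_add_card_compl S
    rw [Fintype.card_fin] at this
    exact_mod_cast this
  have h2 := h1.trans_lt h
  rw [mul_one_div, div_lt_iff₀ hM'] at h2
  linarith

/-- rate converse of Proposition 2: any rate achievable with uniform
compression codes is at least `H(X)`. -/
theorem statement7 {X : Type*} [Fintype X] (pX : X → ℝ) (hX : IsPMF pX)
    (R : ℝ) (M d : ℕ → ℕ)
    (φ : (n : ℕ) → (Fin n → X) × Fin (2 ^ d n) → Fin (M n))
    (ψ : (n : ℕ) → Fin (M n) × Fin (2 ^ d n) → (Fin n → X))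
    -- `limsup (1/n) log M_n ≤ R`
    (hrate : Filter.limsup (fun (n : ℕ) => Real.logb 2 (M n) / n) atTop ≤ R)
    -- `d_n / n → 0`
    (hd : Tendsto (fun (n : ℕ) => (d n : ℝ) / n) atTop (nhds 0))
    -- `P_e(φ_n, ψ_n) → 0`
    (hPe : Tendsto (fun (n : ℕ) =>
        ∑ x : Fin n → X, ∑ u : Fin (2 ^ d n),
          iid pX n x * (1 / (2:ℝ) ^ d n) * (if ψ n (φ n (x, u), u) = x then 0 else 1))
      atTop (nhds 0))
    -- `U_e(φ_n) → 0`
    (hUe : Tendsto (fun (n : ℕ) =>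
        VD (fun m : Fin (M n) =>
              ∑ x : Fin n → X, ∑ u : Fin (2 ^ d n),
                iid pX n x * (1 / (2:ℝ) ^ d n) * (if φ n (x, u) = m then 1 else 0))
           (fun _ => 1 / (M n : ℝ)))
      atTop (nhds 0)) :
    Hsh pX ≤ R := by
  have hne : Nonempty X := by
    by_contra hc
    rw [not_nonempty_iff] at hc
    have := hX.2
    simp at this
  have hl2 : (0:ℝ) < Real.log 2 := Real.log_pos (by norm_num)
  have hMpos : ∀ n, 0 < M n := fun n =>
    (φ n (Classical.arbitrary _, ⟨0, by positivity⟩)).pos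
  have hbdd : IsBoundedUnder (· ≤ ·) atTop (fun (n : ℕ) => Real.logb 2 (M n) / n) := by
    refine ⟨2 + Real.logb 2 (Fintype.card X), ?_⟩
    rw [eventually_map]
    filter_upwards [hUe.eventually_lt_const (show (0:ℝ) < 1 / 2 by norm_num),
      hd.eventually_lt_const (show (0:ℝ) < 1 by norm_num), eventually_ge_atTop 1] with n hn hdn hn1
    have hb := unif_bound (M n) (hMpos n) (φ n) _ (by
      intro m hm
      refine Finset.sum_eq_zero fun x _ => Finset.sum_eq_zero fun u _ => ?_
      rw [if_neg (hm (x, u)), mul_zero]) hn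
    have hn0 : (0:ℝ) < n := by exact_mod_cast hn1
    have hn1' : (1:ℝ) ≤ n := by exact_mod_cast hn1
    have hcX : (0:ℝ) < Fintype.card X := by exact_mod_cast Fintype.card_pos
    rw [Fintype.card_prod, Fintype.card_fun, Fintype.card_fin, Fintype.card_fin] at hb
    push_cast at hb
    have hlog := Real.logb_le_logb_of_le (b := 2) (by norm_num)
      (by exact_mod_cast hMpos n) hb
    rw [Real.logb_mul (by norm_num) (by positivity), Real.logb_mul (by positivity) (by positivity),
      Real.logb_pow, Real.logb_pow, Real.logb_self_eq_one (by norm_num)] at hlog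
    rw [div_lt_one hn0] at hdn
    rw [div_le_iff₀ hn0]
    nlinarith
  have hmain : ∀ n : ℕ, 1 ≤ n → Hsh pX ≤ 1 / (n:ℝ) + Real.logb 2 (M n) / n +
      (∑ x : Fin n → X, ∑ u : Fin (2 ^ d n),
          iid pX n x * (1 / (2:ℝ) ^ d n) * (if ψ n (φ n (x, u), u) = x then 0 else 1))
        * Real.logb 2 (Fintype.card X) := by
    intro n hn
    have hn0 : (0:ℝ) < n := by exact_mod_cast hn
    have h : ∑ x, Real.negMulLog (iid pX n x) ≤ Real.log 2 + Real.log (M n) +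
      (∑ x : Fin n → X, ∑ u : Fin (2 ^ d n),
          iid pX n x * (1 / (2:ℝ) ^ d n) * (if ψ n (φ n (x, u), u) = x then 0 else 1))
        * Real.log (Fintype.card (Fin n → X)) := by
      convert avg_bound (iid pX n) (iid_pmf pX hX n) (M n) (d n) (φ n) (ψ n)
    rw [iid_ent pX hX, Fintype.card_fun, Fintype.card_fin] at h
    push_cast at h
    rw [Real.log_pow] at h
    generalize (∑ x : Fin n → X, ∑ u : Fin (2 ^ d n),
          iid pX n x * (1 / (2:ℝ) ^ d n) * (if ψ n (φ n (x, u), u) = x then (0:ℝ) else 1)) = E at h ⊢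
    rw [Hsh_eq, Real.logb, Real.logb]
    have h5 : 1 / (n:ℝ) + Real.log (M n) / Real.log 2 / n
        + E * (Real.log (Fintype.card X) / Real.log 2)
        = ((Real.log 2 + Real.log (M n) + E * (n * Real.log (Fintype.card X))) / n) / Real.log 2 := by
      field_simp
    rw [h5]
    refine div_le_div_of_nonneg_right ?_ hl2.le
    rw [le_div_iff₀ hn0]
    linarith
  refine le_of_forall_gt_imp_ge_of_dense fun c hc => ?_
  have hev := eventually_lt_of_limsup_lt (hrate.trans_lt hc) hbdd
  have hlim := ((tendsto_one_div_atTop_nhds_zero_nat (𝕜 := ℝ)).add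
    (tendsto_const_nhds (x := c))).add (hPe.mul_const (Real.logb 2 (Fintype.card X)))
  simp only [zero_add, zero_mul, add_zero] at hlim
  refine ge_of_tendsto hlim ?_
  filter_upwards [hev, eventually_ge_atTop 1] with n h1 h2
  have := hmain n h2
  linarith
end
end

section
/- Let (X, p_X) be a DMS on a finite alphabet such that σ² := Var(−log p_X(X_1)) > 0. For each n, let C_n be a (2^{nR}, n, 2^{d_n}) uniform compression code with encoder φ_n and decoder ψ_n. If lim_{n→∞} P_e(φ_n, ψ_n) = 0 and lim_{n→∞} U_e(φ_n) = 0, then lim_{n→∞} d_n / √n = +∞; in particular the seed length must satisfy d_n = Ω(√n). -/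
open Finset Filter Real

attribute [local instance] Classical.propDecidable

noncomputable section

open MeasureTheory ProbabilityTheory in
lemma clt_aux {X : Type*} [Fintype X] (pX : X → ℝ) (hX : IsPMF pX)
    (hσ : 0 < ∑ x, pX x * (Real.logb 2 (pX x) + Hsh pX) ^ 2) (G : Set ℝ) (hG : IsOpen G)
    (hGne : G.Nonempty) :
    ∃ δ : ℝ, 0 < δ ∧ ∀ᶠ n : ℕ in atTop, δ ≤ ∑ x : Fin n → X, iid pX n x *
      (if (√n)⁻¹ * (∑ i, (-Real.logb 2 (pX (x i))) - n * Hsh pX) ∈ G then 1 else 0) := by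
  let mX : MeasurableSpace X := ⊤
  have : DiscreteMeasurableSpace X := ⟨fun _ => trivial⟩
  let P : PMF X := PMF.ofFintype (fun x => ENNReal.ofReal (pX x)) (by
    rw [← ENNReal.ofReal_sum_of_nonneg (fun a _ => hX.1 a), hX.2, ENNReal.ofReal_one])
  let μ : Measure X := P.toMeasure
  have : IsProbabilityMeasure μ := PMF.toMeasure.isProbabilityMeasure P
  have hμs : ∀ x, μ {x} = ENNReal.ofReal (pX x) := by
    intro x
    simp [μ, P]
  have hInteg : ∀ f : X → ℝ, ∫ x, f x ∂μ = ∑ x, pX x * f x := by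
    intro f
    rw [integral_fintype (Integrable.of_finite)]
    refine Finset.sum_congr rfl fun x _ => ?_
    simp [Measure.real, hμs, ENNReal.toReal_ofReal (hX.1 x)]
  let L : X → ℝ := fun x => -Real.logb 2 (pX x)
  have hLm : Measurable L := measurable_of_finite _
  let Q : Measure (ℕ → X) := Measure.infinitePi (fun _ : ℕ => μ)
  let Z : ℕ → (ℕ → X) → ℝ := fun k ω => L (ω k)
  have hmp : ∀ k, MeasurePreserving (fun ω : ℕ → X => ω k) Q μ := fun k =>
    measurePreserving_eval_infinitePi (fun _ : ℕ => μ) k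
  have hmean : ∀ f : X → ℝ, ∫ ω, f (ω 0) ∂Q = ∑ x, pX x * f x := by
    intro f
    rw [← hInteg f, ← (hmp 0).map_eq, integral_map (hmp 0).measurable.aemeasurable
      (measurable_of_finite _).aestronglyMeasurable]
  have hm0 : Q[Z 0] = Hsh pX := by
    have := hmean L
    simp only [Z]
    rw [this]; simp [L, Hsh, Finset.sum_neg_distrib]
  have hident : ∀ i, IdentDistrib (Z i) (Z 0) Q Q := by
    intro i
    refine ⟨(hLm.comp (hmp i).measurable).aemeasurable, (hLm.comp (hmp 0).measurable).aemeasurable, ?_⟩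
    have : ∀ k, Q.map (Z k) = μ.map L := fun k => by
      rw [← (hmp k).map_eq, Measure.map_map hLm (hmp k).measurable]; rfl
    rw [this, this]
  have hindep : iIndepFun Z Q := iIndepFun_infinitePi (P := fun _ : ℕ => μ) (X := fun _ => L) (fun _ => hLm)
  have hL2 : MemLp (Z 0) 2 Q := by
    have h : MemLp L 2 μ := MemLp.of_discrete
    exact h.comp_measurePreserving (hmp 0)
  have hvar : Var[Z 0; Q] = ∑ x, pX x * (Real.logb 2 (pX x) + Hsh pX) ^ 2 := by
    have hZm : AEMeasurable (Z 0) Q := (hLm.comp (hmp 0).measurable).aemeasurable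
    rw [variance_eq_integral hZm, hm0]
    have := hmean (fun x => (L x - Hsh pX)^2)
    simp only [Z]
    rw [this]
    refine Finset.sum_congr rfl fun x _ => ?_
    simp only [L]; ring
  have hv : Var[Z 0; Q].toNNReal ≠ 0 := by
    rw [hvar]; simpa using hσ
  have hclt := tendstoInDistribution_inv_sqrt_mul_sum_sub (X := Z) (P := Q)
    (P' := gaussianReal 0 Var[Z 0; Q].toNNReal) (Y := id) HasLaw.id hL2 hindep hident
  have hport := ProbabilityMeasure.le_liminf_measure_open_of_tendsto hclt.tendsto hG
  simp only [ProbabilityMeasure.coe_mk, Measure.map_id] at hport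
  have hpos : 0 < gaussianReal 0 Var[Z 0; Q].toNNReal G := by
    rw [pos_iff_ne_zero]
    intro h0
    exact (hG.measure_pos volume hGne).ne' (gaussianReal_absolutelyContinuous' 0 hv h0)
  obtain ⟨c, hc0, hc⟩ := exists_between hpos
  have hev := eventually_lt_of_lt_liminf (lt_of_lt_of_le hc hport)
  have hctop : c ≠ ⊤ := (hc.trans_le le_top).ne
  refine ⟨c.toReal, ENNReal.toReal_pos hc0.ne' hctop, ?_⟩
  filter_upwards [hev] with n hn
  have hrm : Measurable (fun (ω : ℕ → X) (i : Fin n) => ω i) := by fun_prop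
  have hsing : ∀ x : Fin n → X, Q.map (fun (ω : ℕ → X) (i : Fin n) => ω i) {x} =
      ENNReal.ofReal (iid pX n x) := by
    intro x
    rw [Measure.map_apply hrm (measurableSet_singleton x)]
    have hset : (fun (ω : ℕ → X) (i : Fin n) => ω i) ⁻¹' {x} =
        Set.pi (↑(Finset.range n)) (fun i => if h : i < n then {x ⟨i, h⟩} else Set.univ) := by
      ext ω
      simp only [Set.mem_preimage, Set.mem_singleton_iff, Set.mem_pi, funext_iff,
        Finset.coe_range, Set.mem_Iio]
      constructor
      · intro h i hi
        simpa [hi] using h ⟨i, hi⟩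
      · intro h i
        simpa [i.2] using h i i.2
    rw [hset, Measure.infinitePi_pi _ (fun i _ => MeasurableSet.of_discrete), Finset.prod_range,
      iid, ENNReal.ofReal_prod_of_nonneg (fun i _ => hX.1 _)]
    refine Finset.prod_congr rfl fun i _ => ?_
    simp [hμs]
  let T : (Fin n → X) → ℝ := fun x => (√n)⁻¹ * (∑ i, L (x i) - n * Hsh pX)
  have hTm : Measurable T := measurable_of_finite _
  have hfun : (fun ω => (√n)⁻¹ * (∑ k ∈ Finset.range n, Z k ω - n * Q[Z 0])) =
      T ∘ (fun (ω : ℕ → X) (i : Fin n) => ω i) := by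
    funext ω
    simp only [T, Function.comp, hm0, Z, Finset.sum_range]
  rw [hfun, ← Measure.map_map hTm hrm, Measure.map_apply hTm hG.measurableSet] at hn
  have hfs : T ⁻¹' G = ↑(Finset.univ.filter fun x => T x ∈ G) := by ext; simp
  rw [hfs, ← sum_measure_singleton] at hn
  simp only [hsing] at hn
  have hnn : ∀ x, 0 ≤ iid pX n x := fun x => Finset.prod_nonneg fun i _ => hX.1 _
  rw [← ENNReal.ofReal_sum_of_nonneg (fun x _ => hnn x)] at hn
  have := (ENNReal.toReal_lt_toReal hctop ENNReal.ofReal_ne_top).2 hn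
  rw [ENNReal.toReal_ofReal (Finset.sum_nonneg fun x _ => hnn x), Finset.sum_filter] at this
  refine this.le.trans (le_of_eq ?_)
  refine Finset.sum_congr rfl fun x _ => ?_
  simp only [T, L, mul_ite, mul_one, mul_zero]

/-- messages hit by a likely source word are too heavy -/
lemma code_low {A U B : Type*} [Fintype A] [Fintype U] [Fintype B] (p : A → ℝ)
    (hp : ∀ a, 0 ≤ p a) (D M : ℝ) (hD : 0 < D) (hM : 0 < M) (hU : (Fintype.card U : ℝ) = D)
    (φ : A × U → B) :
    ∑ x, p x * (if 2 * D / M ≤ p x then 1 else 0) ≤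
      2 * VD (fun m : B => ∑ x, ∑ u, p x * (1 / D) * (if φ (x, u) = m then 1 else 0))
        (fun _ => 1 / M) := by
  set q : B → ℝ := fun m => ∑ x, ∑ u, p x * (1 / D) * (if φ (x, u) = m then 1 else 0) with hq
  have hterm : ∀ x u m, 0 ≤ p x * (1 / D) * (if φ (x, u) = m then 1 else 0) := by
    intro x u m
    have := hp x
    split_ifs <;> positivity
  have h1 : ∀ m, ∑ x, ∑ u, p x * (1 / D) * (if φ (x, u) = m then 1 else 0) *
      (if 2 * D / M ≤ p x then 1 else 0) ≤ 2 * |q m - 1 / M| := by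
    intro m
    by_cases h : ∃ x u, φ (x, u) = m ∧ 2 * D / M ≤ p x
    · obtain ⟨x, u, hxu, hx⟩ := h
      have hle : ∑ x, ∑ u, p x * (1 / D) * (if φ (x, u) = m then 1 else 0) *
          (if 2 * D / M ≤ p x then 1 else 0) ≤ q m := by
        refine Finset.sum_le_sum fun x _ => Finset.sum_le_sum fun u _ => ?_
        have := hterm x u m
        split_ifs at * <;> simp at * <;> assumption
      have hge : 2 / M ≤ q m := by
        have h2 : p x * (1 / D) * (if φ (x, u) = m then 1 else 0) ≤ q m :=
          (Finset.single_le_sum (f := fun u => p x * (1 / D) * (if φ (x, u) = m then 1 else 0))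
            (fun u _ => hterm x u m) (Finset.mem_univ u)).trans
          (Finset.single_le_sum (f := fun x => ∑ u, p x * (1 / D) * (if φ (x, u) = m then 1 else 0))
            (fun x _ => Finset.sum_nonneg fun u _ => hterm x u m) (Finset.mem_univ x))
        refine le_trans ?_ h2
        rw [if_pos hxu, mul_one, mul_one_div, le_div_iff₀ hD]
        calc 2 / M * D = 2 * D / M := by ring
          _ ≤ p x := hx
      have : 2 / M = 2 * (1 / M) := by ring
      have := le_abs_self (q m - 1 / M)
      linarith
    · have : ∑ x, ∑ u, p x * (1 / D) * (if φ (x, u) = m then 1 else 0) *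
          (if 2 * D / M ≤ p x then 1 else 0) = 0 := by
        refine Finset.sum_eq_zero fun x _ => Finset.sum_eq_zero fun u _ => ?_
        by_cases hx : φ (x, u) = m
        · rw [if_neg (fun h' => h ⟨x, u, hx, h'⟩), mul_zero]
        · simp [hx]
      rw [this]; positivity
  calc ∑ x, p x * (if 2 * D / M ≤ p x then 1 else 0)
      = ∑ m, ∑ x, ∑ u, p x * (1 / D) * (if φ (x, u) = m then 1 else 0) *
          (if 2 * D / M ≤ p x then 1 else 0) := by
        rw [Finset.sum_comm]
        refine Finset.sum_congr rfl fun x _ => ?_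
        rw [Finset.sum_comm]
        have : ∀ u, ∑ m, p x * (1 / D) * (if φ (x, u) = m then 1 else 0) *
          (if 2 * D / M ≤ p x then 1 else 0) = p x * (1 / D) * (if 2 * D / M ≤ p x then 1 else 0) := by
          intro u
          rw [← Finset.sum_mul, ← Finset.mul_sum]
          simp
        simp only [this, Finset.sum_const, Finset.card_univ, nsmul_eq_mul, hU]
        field_simp
    _ ≤ ∑ m, 2 * |q m - 1 / M| := Finset.sum_le_sum fun m _ => h1 m
    _ = _ := by rw [VD, Finset.mul_sum]

/-- unlikely source words cannot be decoded -/
lemma code_high {A U B : Type*} [Fintype A] [Fintype U] [Fintype B] (p : A → ℝ)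
    (hp : ∀ a, 0 ≤ p a) (D M : ℝ) (hD : 0 < D) (hU : (Fintype.card U : ℝ) = D)
    (hB : (Fintype.card B : ℝ) = M) (φ : A × U → B) (ψ : B × U → A) (θ : ℝ) (hθ : 0 ≤ θ) :
    ∑ x, p x * (if p x ≤ θ then 1 else 0) ≤
      (∑ x, ∑ u, p x * (1 / D) * (if ψ (φ (x, u), u) = x then 0 else 1)) + M * θ := by
  have key : ∀ u, ∑ x, p x * (if p x ≤ θ then 1 else 0) * (if ψ (φ (x, u), u) = x then 1 else 0)
      ≤ M * θ := by
    intro u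
    have hcard : ((Finset.univ.filter fun x => ψ (φ (x, u), u) = x).card : ℝ) ≤ M := by
      rw [← hB]
      norm_cast
      rw [← Finset.card_univ]
      refine Finset.card_le_card_of_injOn (fun x => φ (x, u)) (fun _ _ => Finset.mem_coe.2 (Finset.mem_univ _)) ?_
      intro a ha b hb hab
      simp only [Finset.coe_filter, Finset.mem_univ, true_and, Set.mem_ofPred_eq] at ha hb
      rw [← ha, ← hb]
      simp only at hab
      rw [hab]
    calc _ ≤ ∑ x, (if ψ (φ (x, u), u) = x then θ else 0) := by
          refine Finset.sum_le_sum fun x _ => ?_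
          split_ifs <;> simp <;> assumption
      _ = ((Finset.univ.filter fun x => ψ (φ (x, u), u) = x).card : ℝ) * θ := by
          rw [← Finset.sum_filter, Finset.sum_const, nsmul_eq_mul]
      _ ≤ _ := mul_le_mul_of_nonneg_right hcard hθ
  have hpt : ∀ x, p x * (if p x ≤ θ then 1 else 0) ≤
      (∑ u, p x * (1 / D) * (if ψ (φ (x, u), u) = x then 0 else 1)) +
      ∑ u, (1 / D) * (p x * (if p x ≤ θ then 1 else 0) * (if ψ (φ (x, u), u) = x then 1 else 0)) := by
    intro x
    rw [← Finset.sum_add_distrib]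
    have : p x * (if p x ≤ θ then 1 else 0) = ∑ u : U, (1 / D) * (p x * (if p x ≤ θ then 1 else 0)) := by
      simp only [Finset.sum_const, Finset.card_univ, nsmul_eq_mul, hU]
      field_simp
    conv_lhs => rw [this]
    refine Finset.sum_le_sum fun u _ => ?_
    have h0 : 0 ≤ p x * (1 / D) := mul_nonneg (hp x) (by positivity)
    clear key this
    split_ifs <;> linarith
  calc _ ≤ _ := Finset.sum_le_sum fun x _ => hpt x
    _ = (∑ x, ∑ u, p x * (1 / D) * (if ψ (φ (x, u), u) = x then 0 else 1)) +
        ∑ u, (1 / D) * ∑ x, (p x * (if p x ≤ θ then 1 else 0) *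
          (if ψ (φ (x, u), u) = x then 1 else 0)) := by
        rw [Finset.sum_add_distrib]
        congr 1
        rw [Finset.sum_comm]
        simp only [Finset.mul_sum]
    _ ≤ (∑ x, ∑ u, p x * (1 / D) * (if ψ (φ (x, u), u) = x then 0 else 1)) +
        ∑ u : U, (1 / D) * (M * θ) := by
        gcongr with u
        exact key u
    _ = _ := by
        simp only [Finset.sum_const, Finset.card_univ, nsmul_eq_mul, hU]
        field_simp

/-- seed converse: for uniform compression codes with vanishing error
and uniformity metrics, the seed length satisfies `d_n/√n → ∞`, i.e. `d_n = Ω(√n)`. -/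
theorem statement8 {X : Type*} [Fintype X] (pX : X → ℝ) (hX : IsPMF pX)
    -- `σ² = Var(−log p_X(X₁)) > 0`
    (hσ : 0 < ∑ x, pX x * (Real.logb 2 (pX x) + Hsh pX) ^ 2)
    (R : ℝ) (d : ℕ → ℕ)
    (φ : (n : ℕ) → (Fin n → X) × Fin (2 ^ d n) → Fin (e2 (R * n)))
    (ψ : (n : ℕ) → Fin (e2 (R * n)) × Fin (2 ^ d n) → (Fin n → X))
    -- `P_e(φ_n, ψ_n) → 0`
    (hPe : Tendsto (fun (n : ℕ) =>
        ∑ x : Fin n → X, ∑ u : Fin (2 ^ d n),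
          iid pX n x * (1 / (2:ℝ) ^ d n) * (if ψ n (φ n (x, u), u) = x then 0 else 1))
      atTop (nhds 0))
    -- `U_e(φ_n) → 0`
    (hUe : Tendsto (fun (n : ℕ) =>
        VD (fun m : Fin (e2 (R * n)) =>
              ∑ x : Fin n → X, ∑ u : Fin (2 ^ d n),
                iid pX n x * (1 / (2:ℝ) ^ d n) * (if φ n (x, u) = m then 1 else 0))
           (fun _ => 1 / (e2 (R * n) : ℝ)))
      atTop (nhds 0)) :
    Tendsto (fun (n : ℕ) => (d n : ℝ) / Real.sqrt n) atTop atTop := by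
  have hnn : ∀ n (x : Fin n → X), 0 ≤ iid pX n x := fun n x =>
    Finset.prod_nonneg fun i _ => hX.1 _
  rw [tendsto_atTop]
  intro C
  set K : ℝ := |C| + 1 with hK
  obtain ⟨δ₁, hδ₁, hup⟩ := clt_aux pX hX hσ (Set.Ioi K) isOpen_Ioi Set.nonempty_Ioi
  obtain ⟨δ₂, hδ₂, hlo⟩ := clt_aux pX hX hσ (Set.Iio (-K)) isOpen_Iio Set.nonempty_Iio
  have hsq : Tendsto (fun n : ℕ => Real.sqrt n) atTop atTop :=
    Real.tendsto_sqrt_atTop.comp tendsto_natCast_atTop_atTop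
  have hε : 0 < δ₁ / 2 := by positivity
  filter_upwards [hup, hlo, hPe.eventually_lt_const hε,
    hUe.eventually_lt_const (show (0:ℝ) < δ₂ / 2 by positivity),
    hsq.eventually_ge_atTop (1 - Real.logb 2 (δ₁ / 2)), hsq.eventually_gt_atTop 0]
    with n hup hlo hPe hUe hn hn0
  by_contra hcon
  have hcon : (d n : ℝ) / √n < C := not_le.1 hcon
  rw [div_lt_iff₀ hn0] at hcon
  have hd : (d n : ℝ) < |C| * √n :=
    hcon.trans_le (mul_le_mul_of_nonneg_right (le_abs_self C) hn0.le)
  have hMpos : (0 : ℝ) < (e2 (R * n) : ℝ) := by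
    have : 0 < e2 (R * n) := Nat.ceil_pos.2 (by positivity)
    exact_mod_cast this
  set M : ℝ := (e2 (R * n) : ℝ) with hM
  have hMl : M = (2:ℝ) ^ Real.logb 2 M := (Real.rpow_logb (by norm_num) (by norm_num) hMpos).symm
  have hεl : δ₁ / 2 = (2:ℝ) ^ Real.logb 2 (δ₁ / 2) :=
    (Real.rpow_logb (by norm_num) (by norm_num) hε).symm
  have hDpos : (0 : ℝ) < (2 : ℝ) ^ d n := by positivity
  have hW : ∀ x : Fin n → X, iid pX n x ≠ 0 →
      iid pX n x = (2 : ℝ) ^ (-∑ i, (-Real.logb 2 (pX (x i)))) := by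
    intro x hx
    have h1 : ∀ i ∈ Finset.univ, pX (x i) ≠ 0 := Finset.prod_ne_zero_iff.1 hx
    have : (-∑ i, (-Real.logb 2 (pX (x i)))) = Real.logb 2 (iid pX n x) := by
      rw [iid, Real.logb_prod _ _ h1, Finset.sum_neg_distrib, neg_neg]
    rw [this, Real.rpow_logb (by norm_num) (by norm_num) (lt_of_le_of_ne (hnn n x) hx.symm)]
  have hlow := code_low (iid pX n) (hnn n) ((2:ℝ) ^ d n) M hDpos hMpos (by simp) (φ n)
  have hhigh := code_high (iid pX n) (hnn n) ((2:ℝ) ^ d n) M hDpos (by simp) (by simp [hM])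
    (φ n) (ψ n) (δ₁ / 2 / M) (by positivity)
  rw [mul_div_cancel₀ _ hMpos.ne'] at hhigh
  rcases le_or_gt (n * Hsh pX - K * √n) (Real.logb 2 M - d n - 1) with hc | hc
  · have hsub : ∑ x : Fin n → X, iid pX n x *
        (if (√n)⁻¹ * (∑ i, (-Real.logb 2 (pX (x i))) - n * Hsh pX) ∈ Set.Iio (-K) then 1 else 0)
        ≤ ∑ x, iid pX n x * (if 2 * (2:ℝ) ^ d n / M ≤ iid pX n x then 1 else 0) := by
      refine Finset.sum_le_sum fun x _ => ?_
      rcases eq_or_ne (iid pX n x) 0 with h0 | h0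
      · simp [h0]
      refine mul_le_mul_of_nonneg_left ?_ (hnn n x)
      by_cases hx : (√n)⁻¹ * (∑ i, (-Real.logb 2 (pX (x i))) - n * Hsh pX) ∈ Set.Iio (-K)
      · rw [if_pos hx, if_pos]
        rw [Set.mem_Iio, inv_mul_lt_iff₀ hn0] at hx
        rw [hW x h0, hMl, ← Real.rpow_natCast]
        nth_rewrite 1 [← Real.rpow_one 2]
        rw [← Real.rpow_add (by norm_num), ← Real.rpow_sub (by norm_num)]
        refine Real.rpow_le_rpow_of_exponent_le (by norm_num) ?_
        linarith
      · rw [if_neg hx]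
        split_ifs <;> norm_num
    have a1 := hlo.trans ((le_of_eq (by congr!)).trans (hsub.trans ((le_of_eq (by congr!)).trans hlow)))
    have a2 := a1.trans_lt (mul_lt_mul_of_pos_left ((le_of_eq (by congr!)).trans_lt hUe) two_pos)
    linarith
  · have hsub : ∑ x : Fin n → X, iid pX n x *
        (if (√n)⁻¹ * (∑ i, (-Real.logb 2 (pX (x i))) - n * Hsh pX) ∈ Set.Ioi K then 1 else 0)
        ≤ ∑ x, iid pX n x * (if iid pX n x ≤ δ₁ / 2 / M then 1 else 0) := by
      refine Finset.sum_le_sum fun x _ => ?_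
      rcases eq_or_ne (iid pX n x) 0 with h0 | h0
      · simp [h0]
      refine mul_le_mul_of_nonneg_left ?_ (hnn n x)
      by_cases hx : (√n)⁻¹ * (∑ i, (-Real.logb 2 (pX (x i))) - n * Hsh pX) ∈ Set.Ioi K
      · rw [if_pos hx, if_pos]
        rw [Set.mem_Ioi, lt_inv_mul_iff₀ hn0] at hx
        rw [hW x h0, hMl, hεl, ← Real.rpow_sub (by norm_num)]
        refine Real.rpow_le_rpow_of_exponent_le (by norm_num) ?_
        have h3 : K * √n = |C| * √n + √n := by rw [hK]; ring
        have h4 : 0 ≤ |C| * √n := by positivity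
        linarith
      · rw [if_neg hx]
        split_ifs <;> norm_num
    have a1 := hup.trans ((le_of_eq (by congr!)).trans (hsub.trans ((le_of_eq (by congr!)).trans hhigh)))
    have a2 := a1.trans_lt (add_lt_add_of_lt_of_le ((le_of_eq (by congr!)).trans_lt hPe) le_rfl)
    linarith
end
end
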